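/- arXiv:1703.09531 — 3 statements merged into one kernel-verified Lean document; each statement's English description precedes it below -/
import Mathlib

section
/- Let w : [a,b] → ℝ be a continuous concave function, −∞ < a < b < ∞, and let a = x₀ < x₁ < ⋯ < x_m = b be any partition of [a,b]. Let w̃_m be the piecewise linear function on [a,b] determined as follows: at each midpoint x_i* = (x_i + x_{i−1})/2 it takes the value w̃_m(x_i*) = (1/(x_i − x_{i−1})) ∫_{x_{i−1}}^{x_i} w(s) ds (the average of w over [x_{i−1}, x_i]); it interpolates linearly between consecutive midpoints x_{i−1}* and x_i*; and on [a, x₁*] and (x_m*, b] it is defined by linearly extending the adjacent linear piece. Then w̃_m is a concave function on [a,b]. -/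
open MeasureTheory Real Set intervalIntegral

/-!
The secant line of a concave `w` through the endpoints of a cell lies below `w` on that cell and
above `w` on the neighbouring ones. The average of an affine function over an interval is its value
at the midpoint, so the secant slopes of the averages at three consecutive midpoints are separated
by the slope of that line: the slopes of the approximant decrease from piece to piece. Concavity on
two adjacent pieces then propagates to all of `[a, b]`, because concavity on two intervals that
overlap in more than a point gives concavity on their union.
-/

section Field

variable {𝕜 : Type*} [Field 𝕜] {f : 𝕜 → 𝕜} {s : Set 𝕜} {x y z : 𝕜}

lemma add_slope_mul_sub (f : 𝕜 → 𝕜) (x y : 𝕜) : f x + slope f x y * (y - x) = f y := by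
  simpa only [smul_eq_mul, vadd_eq_add, mul_comm, add_comm] using sub_smul_slope_vadd f x y

/-- `f` agrees on `s` with a function `y ↦ c * y + d`: the pieces of a piecewise linear function
are the intervals on which it is affine in this sense. -/
def IsAffineOn (f : 𝕜 → 𝕜) (s : Set 𝕜) : Prop :=
  ∃ c d : 𝕜, ∀ y ∈ s, f y = c * y + d

lemma IsAffineOn.eq_add_slope_mul_sub (h : IsAffineOn f s) (hx : x ∈ s) (hy : y ∈ s) (hz : z ∈ s)
    (hxy : x ≠ y) : f z = f x + slope f x y * (z - x) := by
  obtain ⟨c, d, hf⟩ := h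
  have hslope : slope f x y = c := by
    rw [slope_def_field, div_eq_iff (sub_ne_zero.2 hxy.symm), hf x hx, hf y hy]
    ring
  rw [hslope, hf x hx, hf z hz]
  ring

end Field

section LinearOrderedField

variable {𝕜 : Type*} [Field 𝕜] [LinearOrder 𝕜] [IsStrictOrderedRing 𝕜]
  {f : 𝕜 → 𝕜} {s : Set 𝕜} {c p q r t x y z : 𝕜}

lemma slope_le_slope_of_concaveOn (hf : ConcaveOn 𝕜 s f) (hx : x ∈ s) (hz : z ∈ s)
    (hxy : x < y) (hyz : y < z) : slope f y z ≤ slope f x y := by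
  simpa only [slope_def_field] using hf.slope_anti_adjacent hx hz hxy hyz

lemma slope_le_iff_le_add_mul (hxy : x < y) : slope f x y ≤ c ↔ f y ≤ f x + c * (y - x) := by
  rw [slope_def_field, div_le_iff₀ (sub_pos.2 hxy), sub_le_iff_le_add']

lemma le_slope_iff_add_mul_le (hxy : x < y) : c ≤ slope f x y ↔ f x + c * (y - x) ≤ f y := by
  rw [slope_def_field, le_div_iff₀ (sub_pos.2 hxy), le_sub_iff_add_le']

lemma slope_left_le_of_adjacent (hxy : x < y) (hyz : y < z) (h : slope f y z ≤ slope f x y) :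
    slope f x z ≤ slope f x y := by
  rw [slope_le_iff_le_add_mul hyz] at h
  rw [slope_le_iff_le_add_mul (hxy.trans hyz)]
  linear_combination h - add_slope_mul_sub f x y

lemma slope_right_le_of_adjacent (hxy : x < y) (hyz : y < z) (h : slope f y z ≤ slope f x y) :
    slope f y z ≤ slope f x z := by
  rw [le_slope_iff_add_mul_le hxy] at h
  rw [le_slope_iff_add_mul_le (hxy.trans hyz)]
  linear_combination h + add_slope_mul_sub f y z

theorem concaveOn_of_concaveOn_inter_Iic_of_concaveOn_inter_Ici (hs : Convex 𝕜 s)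
    (hq : q ∈ s) (hr : r ∈ s) (hqr : q < r)
    (hleft : ConcaveOn 𝕜 (s ∩ Iic r) f) (hright : ConcaveOn 𝕜 (s ∩ Ici q) f) :
    ConcaveOn 𝕜 s f := by
  refine concaveOn_of_slope_anti_adjacent hs fun {x y z} hx hz hxy hyz => ?_
  simp only [← slope_def_field]
  rcases le_or_gt z r with hzr | hrz
  · exact slope_le_slope_of_concaveOn hleft ⟨hx, (hxy.trans hyz).le.trans hzr⟩ ⟨hz, hzr⟩ hxy hyz
  rcases le_or_gt q x with hqx | hxq
  · exact slope_le_slope_of_concaveOn hright ⟨hx, hqx⟩ ⟨hz, hqx.trans (hxy.trans hyz).le⟩ hxy hyz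
  have hx' : x ∈ s ∩ Iic r := ⟨hx, (hxq.trans hqr).le⟩
  have hz' : z ∈ s ∩ Ici q := ⟨hz, (hqr.trans hrz).le⟩
  have hy : y ∈ s := hs.ordConnected.out hx hz ⟨hxy.le, hyz.le⟩
  rcases lt_or_ge y r with hyr | hry
  · have hyrz : slope f r z ≤ slope f y r := by
      rcases le_or_gt q y with hqy | hyq
      · exact slope_le_slope_of_concaveOn hright ⟨hy, hqy⟩ hz' hyr hrz
      · calc slope f r z ≤ slope f q r :=
              slope_le_slope_of_concaveOn hright ⟨hq, le_rfl⟩ hz' hqr hrz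
          _ ≤ slope f y r := slope_right_le_of_adjacent hyq hqr
              (slope_le_slope_of_concaveOn hleft ⟨hy, hyr.le⟩ ⟨hr, le_rfl⟩ hyq hqr)
    calc slope f y z ≤ slope f y r := slope_left_le_of_adjacent hyr hrz hyrz
      _ ≤ slope f x y := slope_le_slope_of_concaveOn hleft hx' ⟨hr, le_rfl⟩ hxy hyr
  · have hxqy : slope f q y ≤ slope f x q := by
      calc slope f q y ≤ slope f q r := by
            rcases hry.eq_or_lt with rfl | hry
            · rfl
            · exact slope_left_le_of_adjacent hqr hry
                (slope_le_slope_of_concaveOn hright ⟨hq, le_rfl⟩ ⟨hy, (hqr.trans hry).le⟩ hqr hry)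
        _ ≤ slope f x q := slope_le_slope_of_concaveOn hleft hx' ⟨hr, le_rfl⟩ hxq hqr
    have hqy : q < y := hqr.trans_le hry
    calc slope f y z ≤ slope f q y :=
          slope_le_slope_of_concaveOn hright ⟨hq, le_rfl⟩ hz' hqy hyz
      _ ≤ slope f x y := slope_right_le_of_adjacent hxq hqy hxqy

lemma concaveOn_Icc_of_overlap (hpq : p ≤ q) (hqr : q < r) (hrt : r ≤ t)
    (hleft : ConcaveOn 𝕜 (Icc p r) f) (hright : ConcaveOn 𝕜 (Icc q t) f) :
    ConcaveOn 𝕜 (Icc p t) f := by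
  refine concaveOn_of_concaveOn_inter_Iic_of_concaveOn_inter_Ici (convex_Icc p t)
    ⟨hpq, hqr.le.trans hrt⟩ ⟨hpq.trans hqr.le, hrt⟩ hqr ?_ ?_
  · rwa [← Ici_inter_Iic, inter_assoc, Iic_inter_Iic, min_eq_right hrt, Ici_inter_Iic]
  · rwa [← Ici_inter_Iic, inter_right_comm, Ici_inter_Ici, max_eq_right hpq, Ici_inter_Iic]

namespace IsAffineOn

lemma concaveOn (h : IsAffineOn f s) (hs : Convex 𝕜 s) : ConcaveOn 𝕜 s f := by
  obtain ⟨c, d, hf⟩ := h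
  have hlin : ConcaveOn 𝕜 s fun y => c * y + d :=
    ((LinearMap.mulLeft 𝕜 c).concaveOn hs).add_const d
  exact hlin.congr fun y hy => (hf y hy).symm

lemma concaveOn_Icc_of_slope_le (hpq : p < q) (hqr : q < r)
    (hleft : IsAffineOn f (Icc p q)) (hright : IsAffineOn f (Icc q r))
    (hslope : slope f q r ≤ slope f p q) : ConcaveOn 𝕜 (Icc p r) f := by
  have hline (c : 𝕜) : ConcaveOn 𝕜 (Icc p r) fun y => f q + c * (y - q) :=
    IsAffineOn.concaveOn ⟨c, f q - c * q, fun y _ => by ring⟩ (convex_Icc p r)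
  refine ((hline (slope f p q)).inf (hline (slope f q r))).congr fun y hy => ?_
  rw [Pi.inf_apply]
  rcases le_total y q with hyq | hqy
  · have hfy : f y = f q + slope f p q * (y - q) := by
      rw [slope_comm]
      exact hleft.eq_add_slope_mul_sub ⟨hpq.le, le_rfl⟩ ⟨le_rfl, hpq.le⟩ ⟨hy.1, hyq⟩ hpq.ne'
    rw [hfy, inf_eq_left]
    exact add_le_add_right (mul_le_mul_of_nonpos_right hslope (sub_nonpos.2 hyq)) _
  · have hfy : f y = f q + slope f q r * (y - q) :=
      hright.eq_add_slope_mul_sub ⟨le_rfl, hqr.le⟩ ⟨hqr.le, le_rfl⟩ ⟨hqy, hy.2⟩ hqr.ne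
    rw [hfy, inf_eq_right]
    exact add_le_add_right (mul_le_mul_of_nonneg_right hslope (sub_nonneg.2 hqy)) _

end IsAffineOn

theorem concaveOn_Icc_of_isAffineOn_of_slope_le {P : ℕ → 𝕜} {n : ℕ}
    (hP : StrictMonoOn P (Iic (n + 1)))
    (haff : ∀ k ≤ n, IsAffineOn f (Icc (P k) (P (k + 1))))
    (hslope : ∀ k < n, slope f (P (k + 1)) (P (k + 2)) ≤ slope f (P k) (P (k + 1))) :
    ConcaveOn 𝕜 (Icc (P 0) (P (n + 1))) f := by
  induction n with
  | zero => exact (haff 0 le_rfl).concaveOn (convex_Icc _ _)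
  | succ n ih =>
    have hinit : ConcaveOn 𝕜 (Icc (P 0) (P (n + 1))) f :=
      ih (hP.mono (Iic_subset_Iic.2 (Nat.le_succ _))) (fun k hk => haff k (by lia))
        fun k hk => hslope k (by lia)
    have hpq : P n < P (n + 1) := hP (mem_Iic.2 (by lia)) (mem_Iic.2 (by lia)) (by lia)
    have hqr : P (n + 1) < P (n + 2) := hP (mem_Iic.2 (by lia)) (mem_Iic.2 le_rfl) (by lia)
    have hlast : ConcaveOn 𝕜 (Icc (P n) (P (n + 2))) f :=
      IsAffineOn.concaveOn_Icc_of_slope_le hpq hqr (haff n (by lia)) (haff (n + 1) le_rfl)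
        (hslope n (by lia))
    have h0n : P 0 ≤ P n := hP.monotoneOn (mem_Iic.2 (by lia)) (mem_Iic.2 (by lia)) (by lia)
    exact concaveOn_Icc_of_overlap h0n hpq hqr.le hinit hlast

theorem concaveOn_Icc_of_isAffineOn_extend_of_slope_le {P : ℕ → 𝕜} {n : ℕ} {a b : 𝕜}
    (hP : StrictMonoOn P (Iic (n + 1)))
    (haff : ∀ k ≤ n, IsAffineOn f (Icc (P k) (P (k + 1))))
    (hslope : ∀ k < n, slope f (P (k + 1)) (P (k + 2)) ≤ slope f (P k) (P (k + 1)))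
    (ha : a ≤ P 0) (hb : P (n + 1) ≤ b)
    (hleft : IsAffineOn f (Icc a (P 1))) (hright : IsAffineOn f (Icc (P n) b)) :
    ConcaveOn 𝕜 (Icc a b) f := by
  have hPle {i j : ℕ} (hij : i ≤ j) (hj : j ≤ n + 1) : P i ≤ P j :=
    hP.monotoneOn (mem_Iic.2 (hij.trans hj)) (mem_Iic.2 hj) hij
  have h01 : P 0 < P 1 := hP (mem_Iic.2 (by lia)) (mem_Iic.2 (by lia)) one_pos
  have hlast : P n < P (n + 1) := hP (mem_Iic.2 (by lia)) (mem_Iic.2 le_rfl) (by lia)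
  have hinit : ConcaveOn 𝕜 (Icc a (P (n + 1))) f :=
    concaveOn_Icc_of_overlap ha h01 (hPle (by lia) le_rfl) (hleft.concaveOn (convex_Icc _ _))
      (concaveOn_Icc_of_isAffineOn_of_slope_le hP haff hslope)
  exact concaveOn_Icc_of_overlap (ha.trans (hPle n.zero_le n.le_succ)) hlast hb hinit
    (hright.concaveOn (convex_Icc _ _))

lemma add_slope_mul_sub_le_of_concaveOn (hf : ConcaveOn 𝕜 s f) (hq : q ∈ s) (hr : r ∈ s)
    (hy : y ∈ Icc q r) : f q + slope f q r * (y - q) ≤ f y := by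
  rcases hy.1.eq_or_lt with rfl | hqy
  · simp
  rcases hy.2.eq_or_lt with rfl | hyr
  · exact (add_slope_mul_sub f q y).le
  · exact (le_slope_iff_add_mul_le hqy).1 <| slope_left_le_of_adjacent hqy hyr <|
      slope_le_slope_of_concaveOn hf hq hr hqy hyr

lemma le_add_slope_mul_sub_of_concaveOn_of_le (hf : ConcaveOn 𝕜 s f) (hr : r ∈ s) (hqr : q < r)
    (hy : y ∈ s) (hyq : y ≤ q) : f y ≤ f q + slope f q r * (y - q) := by
  rcases hyq.eq_or_lt with rfl | hyq
  · simp
  · linear_combination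
      (le_slope_iff_add_mul_le hyq).1 (slope_le_slope_of_concaveOn hf hy hr hyq hqr)

lemma le_add_slope_mul_sub_of_concaveOn_of_ge (hf : ConcaveOn 𝕜 s f) (hq : q ∈ s) (hqr : q < r)
    (hy : y ∈ s) (hry : r ≤ y) : f y ≤ f q + slope f q r * (y - q) := by
  rcases hry.eq_or_lt with rfl | hry
  · exact (add_slope_mul_sub f q r).ge
  · exact (slope_le_iff_le_add_mul (hqr.trans hry)).1 <| slope_left_le_of_adjacent hqr hry <|
      slope_le_slope_of_concaveOn hf hq hy hqr hry

end LinearOrderedField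

section IntervalAverage

variable {f g w : ℝ → ℝ} {p q r t u v : ℝ}

lemma intervalAverage_mono_on (huv : u ≤ v) (hf : IntervalIntegrable f volume u v)
    (hg : IntervalIntegrable g volume u v) (h : ∀ s ∈ Icc u v, f s ≤ g s) :
    ⨍ s in u..v, f s ≤ ⨍ s in u..v, g s := by
  simp only [interval_average_eq_div]
  exact div_le_div_of_nonneg_right (integral_mono_on huv hf hg h) (sub_nonneg.2 huv)

lemma intervalAverage_add_mul_sub (k c q : ℝ) (huv : u ≠ v) :
    ⨍ s in u..v, (k + c * (s - q)) = k + c * ((u + v) / 2 - q) := by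
  rw [interval_average_eq_div, div_eq_iff (sub_ne_zero.2 huv.symm),
    intervalIntegral.integral_add (by simp)
      (Continuous.intervalIntegrable (by fun_prop) u v),
    intervalIntegral.integral_const_mul, intervalIntegral.integral_sub (by simp) (by simp)]
  simp only [intervalIntegral.integral_const, integral_id, smul_eq_mul]
  ring

lemma intervalAverage_le_of_le_affine {k c : ℝ} (huv : u < v)
    (hf : IntervalIntegrable f volume u v) (h : ∀ s ∈ Icc u v, f s ≤ k + c * (s - q)) :
    ⨍ s in u..v, f s ≤ k + c * ((u + v) / 2 - q) :=
  (intervalAverage_mono_on huv.le hf (Continuous.intervalIntegrable (by fun_prop) u v) h).trans_eq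
    (intervalAverage_add_mul_sub k c q huv.ne)

lemma le_intervalAverage_of_affine_le {k c : ℝ} (huv : u < v)
    (hf : IntervalIntegrable f volume u v) (h : ∀ s ∈ Icc u v, k + c * (s - q) ≤ f s) :
    k + c * ((u + v) / 2 - q) ≤ ⨍ s in u..v, f s :=
  (intervalAverage_add_mul_sub k c q huv.ne).symm.trans_le
    (intervalAverage_mono_on huv.le (Continuous.intervalIntegrable (by fun_prop) u v) hf h)

theorem slope_intervalAverage_le_of_concaveOn (hpq : p < q) (hqr : q < r) (hrt : r < t)
    (hw : ConcaveOn ℝ (Icc p t) w) (hwint : IntervalIntegrable w volume p t) :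
    ((⨍ s in r..t, w s) - ⨍ s in q..r, w s) / ((r + t) / 2 - (q + r) / 2) ≤
      ((⨍ s in q..r, w s) - ⨍ s in p..q, w s) / ((q + r) / 2 - (p + q) / 2) := by
  have hp : p ∈ Icc p t := ⟨le_rfl, by linarith⟩
  have hq : q ∈ Icc p t := ⟨hpq.le, by linarith⟩
  have hr : r ∈ Icc p t := ⟨by linarith, hrt.le⟩
  have ht : t ∈ Icc p t := ⟨by linarith, le_rfl⟩
  have hwint_sub {u v : ℝ} (hu : u ∈ Icc p t) (hv : v ∈ Icc p t) :
      IntervalIntegrable w volume u v :=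
    hwint.mono_set (uIcc_subset_uIcc (Icc_subset_uIcc hu) (Icc_subset_uIcc hv))
  set c := slope w q r
  have hleft : ⨍ s in p..q, w s ≤ w q + c * ((p + q) / 2 - q) :=
    intervalAverage_le_of_le_affine hpq (hwint_sub hp hq) fun s hs =>
      le_add_slope_mul_sub_of_concaveOn_of_le hw hr hqr ⟨hs.1, hs.2.trans hq.2⟩ hs.2
  have hmiddle : w q + c * ((q + r) / 2 - q) ≤ ⨍ s in q..r, w s :=
    le_intervalAverage_of_affine_le hqr (hwint_sub hq hr) fun s hs =>
      add_slope_mul_sub_le_of_concaveOn hw hq hr hs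
  have hright : ⨍ s in r..t, w s ≤ w q + c * ((r + t) / 2 - q) :=
    intervalAverage_le_of_le_affine hrt (hwint_sub hr ht) fun s hs =>
      le_add_slope_mul_sub_of_concaveOn_of_ge hw hq hqr ⟨hr.1.trans hs.1, hs.2⟩ hs.1
  calc _ ≤ c := by rw [div_le_iff₀ (by linarith)]; linarith
    _ ≤ _ := by rw [le_div_iff₀ (by linarith)]; linarith

end IntervalAverage

section Partition

/-- The midpoint of the `k`-th cell `[x k, x (k + 1)]` of the partition with nodes `x`, that is, the
knot `x_{k+1}*` of the piecewise linear approximant; cells are counted from `0`. -/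
noncomputable def cellMidpoint (x : ℕ → ℝ) (k : ℕ) : ℝ :=
  (x k + x (k + 1)) / 2

variable {x : ℕ → ℝ} {m n : ℕ} {f w : ℝ → ℝ}

lemma strictMonoOn_cellMidpoint (hx : StrictMonoOn x (Iic (n + 1))) :
    StrictMonoOn (cellMidpoint x) (Iic n) := fun i hi j hj hij => by
  have hi : i ≤ n := hi
  have hj : j ≤ n := hj
  have hleft : x i < x j := hx (mem_Iic.2 (by lia)) (mem_Iic.2 (by lia)) hij
  have hright : x (i + 1) < x (j + 1) := hx (mem_Iic.2 (by lia)) (mem_Iic.2 (by lia)) (by lia)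
  exact div_lt_div_of_pos_right (add_lt_add hleft hright) two_pos

lemma node_mem_Icc (hx : MonotoneOn x (Iic m)) {k : ℕ} (hk : k ≤ m) : x k ∈ Icc (x 0) (x m) :=
  ⟨hx (mem_Iic.2 m.zero_le) (mem_Iic.2 hk) k.zero_le, hx (mem_Iic.2 hk) (mem_Iic.2 le_rfl) hk⟩

lemma cellMidpoint_mem_Icc (hx : MonotoneOn x (Iic m)) {k : ℕ} (hk : k < m) :
    cellMidpoint x k ∈ Icc (x 0) (x m) := by
  have hleft : x k ∈ Icc (x 0) (x m) := node_mem_Icc hx hk.le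
  have hright : x (k + 1) ∈ Icc (x 0) (x m) := node_mem_Icc hx hk
  constructor <;> simp only [cellMidpoint] <;> linarith [hleft.1, hleft.2, hright.1, hright.2]

lemma slope_cellMidpoint_le_of_concaveOn (hx : StrictMonoOn x (Iic m))
    (hw : ConcaveOn ℝ (Icc (x 0) (x m)) w) (hwint : IntervalIntegrable w volume (x 0) (x m))
    (hf : ∀ k < m, f (cellMidpoint x k) = ⨍ s in x k..x (k + 1), w s) {k : ℕ} (hk : k + 2 < m) :
    slope f (cellMidpoint x (k + 1)) (cellMidpoint x (k + 2)) ≤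
      slope f (cellMidpoint x k) (cellMidpoint x (k + 1)) := by
  have hlt (i : ℕ) (hi : i < m) : x i < x (i + 1) :=
    hx (mem_Iic.2 hi.le) (mem_Iic.2 hi) (Nat.lt_succ_self i)
  have hfirst : x k ∈ Icc (x 0) (x m) := node_mem_Icc hx.monotoneOn (by lia)
  have hlast : x (k + 3) ∈ Icc (x 0) (x m) := node_mem_Icc hx.monotoneOn hk
  have hsub : Icc (x k) (x (k + 3)) ⊆ Icc (x 0) (x m) :=
    Icc_subset_Icc hfirst.1 hlast.2
  have hwint' : IntervalIntegrable w volume (x k) (x (k + 3)) :=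
    hwint.mono_set <| uIcc_subset_uIcc (Icc_subset_uIcc hfirst) (Icc_subset_uIcc hlast)
  rw [slope_def_field, slope_def_field, hf k (by lia), hf (k + 1) (by lia), hf (k + 2) hk]
  exact slope_intervalAverage_le_of_concaveOn (hlt k (by lia)) (hlt (k + 1) (by lia))
    (hlt (k + 2) hk) (hw.subset hsub (convex_Icc _ _)) hwint'

end Partition

/-- let `w` be a continuous concave function on `[a,b]` and let
`a = x 0 < x 1 < ⋯ < x m = b` be a partition (`m ≥ 2`). Let `wt` be the piecewise
linear approximant of `w`: at each midpoint `(x (i-1) + x i)/2` it takes the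
average value of `w` over `[x (i-1), x i]`, it is affine between consecutive
midpoints, and it is affine (linearly extended) on `[a, (x 1 + x 2)/2]` and on
`[(x (m-2) + x (m-1))/2, b]`. Then `wt` is concave on `[a,b]`. -/
theorem piecewise_linear_approx_concave
    (a b : ℝ) (hab : a < b) (m : ℕ) (hm : 2 ≤ m)
    (x : ℕ → ℝ) (hx0 : x 0 = a) (hxm : x m = b)
    (hxmono : ∀ i < m, x i < x (i + 1))
    (w : ℝ → ℝ) (hcont : ContinuousOn w (Icc a b))
    (hconc : ConcaveOn ℝ (Icc a b) w)
    (wt : ℝ → ℝ)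
    (hval : ∀ i, 1 ≤ i → i ≤ m →
      wt ((x (i - 1) + x i) / 2) =
        (1 / (x i - x (i - 1))) * ∫ s in (x (i - 1))..(x i), w s)
    (haff : ∀ i, 2 ≤ i → i ≤ m → ∃ c d : ℝ,
      ∀ y ∈ Icc ((x (i - 2) + x (i - 1)) / 2) ((x (i - 1) + x i) / 2),
        wt y = c * y + d)
    (haffL : ∃ c d : ℝ, ∀ y ∈ Icc a ((x 1 + x 2) / 2), wt y = c * y + d)
    (haffR : ∃ c d : ℝ, ∀ y ∈ Icc ((x (m - 2) + x (m - 1)) / 2) b, wt y = c * y + d) :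
    ConcaveOn ℝ (Icc a b) wt := by
  obtain ⟨n, rfl⟩ := Nat.exists_eq_add_of_le' hm
  subst hx0 hxm
  have hx : StrictMonoOn x (Iic (n + 2)) := strictMonoOn_Iic_of_lt_succ hxmono
  have hval' (k : ℕ) (hk : k < n + 2) : wt (cellMidpoint x k) = ⨍ s in x k..x (k + 1), w s := by
    rw [interval_average_eq, smul_eq_mul, ← one_div]
    exact hval (k + 1) k.succ_pos hk
  have hwint : IntervalIntegrable w volume (x 0) (x (n + 2)) :=
    hcont.intervalIntegrable_of_Icc hab.le
  exact concaveOn_Icc_of_isAffineOn_extend_of_slope_le (strictMonoOn_cellMidpoint hx)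
    (fun k hk => haff (k + 2) (by lia) (by lia))
    (fun k hk => slope_cellMidpoint_le_of_concaveOn hx hconc hwint hval' (by lia))
    (cellMidpoint_mem_Icc hx.monotoneOn (by lia)).1 (cellMidpoint_mem_Icc hx.monotoneOn (by lia)).2
    haffL haffR
end

section
/- Let w : [a,b] → ℝ be a piecewise linear concave function with N knots located at the points a + z₁ < a + z₂ < ⋯ < a + z_N, where 0 < zᵢ < b − a. Then w can be written in the form w(x) = γ₁ ∑_{i=1}^N ((zᵢ ∧ (x−a))/zᵢ) pᵢ − γ₂ (x−a) + γ₃ for all x ∈ [a,b], with parameters satisfying 0 ≤ γ₁ ≤ (w′₊(a) − w′₋(b))(b−a), |γ₂| ≤ |w′₋(b)|, γ₃ ∈ ℝ, pᵢ ≥ 0 for i = 1,…,N, and ∑_{i=1}^N pᵢ = 1. -/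
open MeasureTheory Real Set

/-!
Each ramp `x ↦ min (z i) (x - a)` has slope `1` up to the knot `a + z i` and slope `0` after it, so
the slope drop `c i - c (i + 1)` of `w` at that knot is produced by adding the ramp with coefficient
`c i - c (i + 1)` to the affine function of slope `c N`. Rescaling the ramps to height `1` turns the
coefficients into the nonnegative weights `(c i - c (i + 1)) * z i`; their total mass is `γ₁`, and
`p` is their normalization.
-/

theorem sum_slope_drop_mul_le {K : Type*} [Ring K] [PartialOrder K] [IsOrderedRing K] {N : ℕ}
    {c : ℕ → K} {z : Fin N → K} {L : K}
    (hc : ∀ i < N, c (i + 1) ≤ c i) (hz : ∀ i, z i ≤ L) :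
    ∑ i : Fin N, (c i - c (i + 1)) * z i ≤ (c 0 - c N) * L :=
  calc ∑ i : Fin N, (c i - c (i + 1)) * z i
      ≤ ∑ i : Fin N, (c i - c (i + 1)) * L :=
        Finset.sum_le_sum fun i _ =>
          mul_le_mul_of_nonneg_left (hz i) (sub_nonneg.2 (hc i i.isLt))
    _ = (c 0 - c N) * L := by
        rw [← Finset.sum_mul, Fin.sum_univ_eq_sum_range (fun i => c i - c (i + 1)),
          Finset.sum_range_sub']

theorem eq_add_sum_slope_drop_mul_min_sub {K : Type*} [CommRing K] [LinearOrder K]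
    {n : ℕ} {t c d : ℕ → K} {w : K → K}
    (ht : MonotoneOn t (Iic (n + 1)))
    (haff : ∀ i ≤ n, ∀ y ∈ Icc (t i) (t (i + 1)), w y = c i * y + d i)
    {x : K} (hx : x ∈ Icc (t 0) (t (n + 1))) :
    w x = w (t 0) + c n * (x - t 0)
      + ∑ j ∈ Finset.range n, (c j - c (j + 1)) * (min (t (j + 1)) x - t 0) := by
  induction n generalizing x with
  | zero =>
    rw [haff 0 le_rfl x hx, haff 0 le_rfl (t 0) ⟨le_rfl, hx.1.trans hx.2⟩, Finset.sum_range_zero]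
    ring
  | succ n ih =>
    have ih_left {y : K} (hy : y ∈ Icc (t 0) (t (n + 1))) :=
      ih (ht.mono (Iic_subset_Iic.2 (Nat.le_succ _))) (fun i hi => haff i (Nat.le_succ_of_le hi)) hy
    rw [Finset.sum_range_succ]
    rcases le_total x (t (n + 1)) with hxt | htx
    · rw [ih_left ⟨hx.1, hxt⟩, min_eq_right hxt]
      ring
    · have le_last_knot {j : ℕ} (hj : j ≤ n + 1) : t j ≤ t (n + 1) :=
        ht (mem_Iic.2 (by lia)) (mem_Iic.2 (by lia)) hj
      have saturated : ∀ j ∈ Finset.range n, (c j - c (j + 1)) * (min (t (j + 1)) x - t 0) =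
          (c j - c (j + 1)) * (min (t (j + 1)) (t (n + 1)) - t 0) := by
        intro j hj
        have hjn : t (j + 1) ≤ t (n + 1) := le_last_knot (by have := Finset.mem_range.1 hj; lia)
        rw [min_eq_left (hjn.trans htx), min_eq_left hjn]
      have at_last_knot := ih_left ⟨le_last_knot (Nat.zero_le _), le_rfl⟩
      rw [haff (n + 1) le_rfl _ ⟨le_rfl, htx.trans hx.2⟩] at at_last_knot
      rw [haff (n + 1) le_rfl x ⟨htx, hx.2⟩, Finset.sum_congr rfl saturated, min_eq_left htx]
      linear_combination at_last_knot

theorem monotoneOn_Iic_of_knots {K : Type*} [AddCommGroup K] [PartialOrder K]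
    [IsOrderedAddMonoid K] {a b : K} {N : ℕ} {z : Fin N → K} {t : ℕ → K}
    (hab : a ≤ b) (hz : Monotone z) (hz0 : ∀ i, 0 ≤ z i)
    (hzb : ∀ i, z i ≤ b - a) (ht0 : t 0 = a) (htN : t (N + 1) = b)
    (htz : ∀ i : Fin N, t (i + 1) = a + z i) : MonotoneOn t (Iic (N + 1)) := by
  have a_le_succ {k : ℕ} (hk : k ≤ N) : a ≤ t (k + 1) := by
    rcases hk.lt_or_eq with hkN | rfl
    · exact (le_add_of_nonneg_right (hz0 _)).trans_eq (htz ⟨k, hkN⟩).symm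
    · exact hab.trans_eq htN.symm
  refine monotoneOn_of_le_add_one ordConnected_Iic fun k _ _ hk => ?_
  have hkN : k ≤ N := Nat.le_of_succ_le_succ hk
  rcases k with _ | k
  · exact ht0.trans_le (a_le_succ hkN)
  · rw [htz ⟨k, hkN⟩]
    rcases hkN.lt_or_eq with hlt | rfl
    · rw [htz ⟨k + 1, hlt⟩]
      gcongr
      exact hz (Fin.mk_le_mk.2 k.le_succ)
    · exact (le_sub_iff_add_le'.1 (hzb _)).trans_eq htN.symm

theorem eq_add_sum_slope_drop_mul_min {K : Type*} [CommRing K] [LinearOrder K] [IsOrderedRing K]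
    {a b : K} {N : ℕ} {z : Fin N → K} {t c d : ℕ → K} {w : K → K}
    (ht : MonotoneOn t (Iic (N + 1))) (ht0 : t 0 = a) (htN : t (N + 1) = b)
    (htz : ∀ i : Fin N, t (i + 1) = a + z i)
    (haff : ∀ i ≤ N, ∀ y ∈ Icc (t i) (t (i + 1)), w y = c i * y + d i)
    {x : K} (hx : x ∈ Icc a b) :
    w x = w a + c N * (x - a) + ∑ i : Fin N, (c i - c (i + 1)) * min (z i) (x - a) := by
  subst ht0 htN
  have ramp_eq (i : Fin N) : min (t (i + 1)) x - t 0 = min (z i) (x - t 0) := by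
    rw [htz, ← min_sub_sub_right, add_sub_cancel_left]
  simp only [eq_add_sum_slope_drop_mul_min_sub ht haff hx, Finset.sum_range, ramp_eq]

section OrderedField

variable {K : Type*} [Field K] [LinearOrder K] [IsStrictOrderedRing K]

theorem exists_mem_stdSimplex_eq_sum_smul {ι : Type*} [Fintype ι] [Nonempty ι] {q : ι → K}
    (hq : ∀ i, 0 ≤ q i) : ∃ p ∈ stdSimplex K ι, q = (∑ i, q i) • p := by
  classical
  rcases (Finset.sum_nonneg fun i _ => hq i).eq_or_lt' with hsum | hsum
  · obtain ⟨i⟩ := ‹Nonempty ι›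
    refine ⟨Pi.single i 1, single_mem_stdSimplex K i, ?_⟩
    rw [hsum, zero_smul]
    exact (Fintype.sum_eq_zero_iff_of_nonneg hq).1 hsum
  · refine ⟨(∑ i, q i)⁻¹ • q, ⟨fun i => mul_nonneg (inv_nonneg.2 hsum.le) (hq i), ?_⟩,
      (smul_inv_smul₀ hsum.ne' q).symm⟩
    simp only [Pi.smul_apply, smul_eq_mul, ← Finset.mul_sum, inv_mul_cancel₀ hsum.ne']

theorem piecewise_linear_concave_representation_general
    {a b : K} {N : ℕ} (hN : 1 ≤ N) {z : Fin N → K} (hz : Monotone z)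
    (hz0 : ∀ i, 0 < z i) (hzb : ∀ i, z i ≤ b - a)
    {w : K → K} {t : ℕ → K} (ht0 : t 0 = a) (htN : t (N + 1) = b)
    (htz : ∀ i : Fin N, t (i + 1) = a + z i) {c d : ℕ → K}
    (haff : ∀ i ≤ N, ∀ y ∈ Icc (t i) (t (i + 1)), w y = c i * y + d i)
    (hc : ∀ i < N, c (i + 1) ≤ c i) :
    ∃ (γ₁ γ₂ γ₃ : K) (p : Fin N → K),
      0 ≤ γ₁ ∧ γ₁ ≤ (c 0 - c N) * (b - a) ∧ |γ₂| ≤ |c N| ∧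
      (∀ i, 0 ≤ p i) ∧ (∑ i, p i) = 1 ∧
      ∀ x ∈ Icc a b,
        w x = γ₁ * (∑ i, min (z i) (x - a) / z i * p i) - γ₂ * (x - a) + γ₃ := by
  have : Nonempty (Fin N) := ⟨⟨0, hN⟩⟩
  have hab : a ≤ b := sub_nonneg.1 ((hz0 ⟨0, hN⟩).le.trans (hzb _))
  have ht := monotoneOn_Iic_of_knots hab hz (fun i => (hz0 i).le) hzb ht0 htN htz
  have mass_nonneg (i : Fin N) : 0 ≤ (c i - c (i + 1)) * z i :=
    mul_nonneg (sub_nonneg.2 (hc i i.isLt)) (hz0 i).le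
  obtain ⟨p, ⟨hp0, hp1⟩, hp⟩ := exists_mem_stdSimplex_eq_sum_smul mass_nonneg
  refine ⟨∑ i : Fin N, (c i - c (i + 1)) * z i, -c N, w a, p,
    Finset.sum_nonneg fun i _ => mass_nonneg i, sum_slope_drop_mul_le hc hzb, (abs_neg _).le,
    hp0, hp1, fun x hx => ?_⟩
  have ramp_eq (i : Fin N) : (c i - c (i + 1)) * min (z i) (x - a) =
      (∑ j : Fin N, (c j - c (j + 1)) * z j) * (min (z i) (x - a) / z i * p i) :=
    calc (c i - c (i + 1)) * min (z i) (x - a)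
        = min (z i) (x - a) / z i * ((c i - c (i + 1)) * z i) := by field_simp [(hz0 i).ne']
      _ = min (z i) (x - a) / z i * ((∑ j : Fin N, (c j - c (j + 1)) * z j) * p i) :=
        congrArg _ (congrFun hp i)
      _ = _ := mul_left_comm _ _ _
  rw [eq_add_sum_slope_drop_mul_min ht ht0 htN htz haff hx,
    Finset.sum_congr rfl fun i _ => ramp_eq i, ← Finset.mul_sum]
  ring

end OrderedField

/-- a continuous piecewise linear concave function `w` on `[a,b]` with `N`
knots at `a + z 0 < ⋯ < a + z (N-1)` (where `0 < z i < b − a`), affine with slope `c i`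
on the `i`-th subinterval `[t i, t (i+1)]` determined by the knots (`t 0 = a`,
`t (i+1) = a + z i`, `t (N+1) = b`) and with a genuine kink at every knot
(`c (i+1) < c i`), can be written as
`w x = γ₁ ∑ᵢ (min (z i) (x−a) / z i) pᵢ − γ₂ (x−a) + γ₃` on `[a,b]`, with
`0 ≤ γ₁ ≤ (w′₊(a) − w′₋(b))(b−a) = (c 0 − c N)(b−a)`, `|γ₂| ≤ |w′₋(b)| = |c N|`,
`pᵢ ≥ 0` and `∑ᵢ pᵢ = 1`. -/
theorem piecewise_linear_concave_representation
    (a b : ℝ) (hab : a < b) (N : ℕ) (hN : 1 ≤ N)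
    (z : Fin N → ℝ) (hzmono : StrictMono z)
    (hz0 : ∀ i, 0 < z i) (hzb : ∀ i, z i < b - a)
    (w : ℝ → ℝ) (hcont : ContinuousOn w (Icc a b))
    (hconc : ConcaveOn ℝ (Icc a b) w)
    (t : ℕ → ℝ) (ht0 : t 0 = a) (htN : t (N + 1) = b)
    (htz : ∀ i : Fin N, t (i + 1) = a + z i)
    (c d : ℕ → ℝ)
    (haff : ∀ i ≤ N, ∀ y ∈ Icc (t i) (t (i + 1)), w y = c i * y + d i)
    (hkink : ∀ i < N, c (i + 1) < c i) :
    ∃ (γ₁ γ₂ γ₃ : ℝ) (p : Fin N → ℝ),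
      0 ≤ γ₁ ∧ γ₁ ≤ (c 0 - c N) * (b - a) ∧ |γ₂| ≤ |c N| ∧
      (∀ i, 0 ≤ p i) ∧ (∑ i, p i) = 1 ∧
      ∀ x ∈ Icc a b,
        w x = γ₁ * (∑ i, min (z i) (x - a) / z i * p i) - γ₂ * (x - a) + γ₃ := by
  exact piecewise_linear_concave_representation_general hN hzmono.monotone hz0
    (fun i => (hzb i).le) ht0 htN htz haff fun i hi => (hkink i hi).le
end

section
/- Let f₀ ∈ F_{α,β} for some α > 0, β ∈ ℝ, and let ([aₙ,bₙ]) be a sequence of compact intervals such that [−(8/(5α)) log n, (8/(5α)) log n] ⊂ [aₙ,bₙ] and (bₙ − aₙ) = o(n^{4/5}). Then for every n ≥ n₀, where n₀ is an integer depending only on α and β, there exists a log-concave density f̄ₙ that is piecewise log-linear with N̄ ≤ C(α,β) n^{1/5} log n knots z₁,…,z_{N̄} ∈ [0, bₙ − aₙ] satisfying: (i) h²(f₀, f̄ₙ) ≤ C(α,β) [ (log n)² n^{−4/5} + (bₙ−aₙ)² n^{−8/5} ]; (ii) { x ∈ ℝ : f̄ₙ(x) > 0 } = [aₙ, bₙ];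 (iii) the knots are c n^{−6/5} log n-separated for some universal constant c > 0; (iv) f₀(x) ≤ C(α,β) f̄ₙ(x) for all x ∈ [aₙ, bₙ]; (v) there exist γ̄₁ ∈ [0, 2(bₙ−aₙ) n^{4/5}], γ̄₂ with |γ̄₂| ≤ n^{4/5}, γ̄₃ ∈ ℝ, and p̄₁,…,p̄_{N̄} with p̄ᵢ ≥ 0 and ∑_{i=1}^{N̄} p̄ᵢ = 1, such that f̄ₙ(x) = exp( γ̄₁ ∑_{i=1}^{N̄} ((zᵢ ∧ (x−aₙ))/zᵢ) p̄ᵢ − γ̄₂ (x−aₙ) + γ̄₃ ) · 1_{[aₙ,bₙ]}(x). Here C(α,β) denotes a constant depending only on α and β. -/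
open MeasureTheory Real Set Asymptotics Filter

/-- A probability density on ℝ: measurable, nonnegative, integrating to one. -/
def IsDensityFn (f : ℝ → ℝ) : Prop :=
  Measurable f ∧ (∀ x, 0 ≤ f x) ∧ ∫ x, f x = 1

/-- Log-concavity of a nonnegative function (multiplicative form, allowing zeros). -/
def IsLogConcaveFn (f : ℝ → ℝ) : Prop :=
  ∀ x y t : ℝ, 0 ≤ t → t ≤ 1 →
    f x ^ t * f y ^ (1 - t) ≤ f (t * x + (1 - t) * y)

/-- Membership in `F_{α,β}`: an upper semi-continuous log-concave probability density
with the envelope bound `f x ≤ e^{β − α|x|}`. -/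
def MemF (α β : ℝ) (f : ℝ → ℝ) : Prop :=
  IsDensityFn f ∧ UpperSemicontinuous f ∧ IsLogConcaveFn f ∧
    ∀ x : ℝ, f x ≤ Real.exp (β - α * |x|)

/-- The squared Hellinger distance between two densities on ℝ. -/
noncomputable def hellingerSq (p q : ℝ → ℝ) : ℝ :=
  ∫ x, (Real.sqrt (p x) - Real.sqrt (q x)) ^ 2

/-!
Replace the log-density by its least majorant `u` that is concave and `n^(4/5)`-Lipschitz (a
sup-convolution); the exponential envelope limits the cost in mass to `O(n^(-4/5))`. Interpolating
`u` linearly on a grid of mesh `n^(-6/5) log n` moves it by `O(n^(-2/5) log n)`, but leaves too many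
kinks. Attach to each kink the length of the graph before it plus the variation of the `arsinh` of
the slope. On a run of kinks where this potential grows by `r`, the horizontal extent times the drop
of the slope is `O(r²)`, because the slope `s` varies by `O(r (1 + |s|))` and the length controls
`∫ (1 + |s|)`. Merging each run into one kink at its barycentre therefore raises the
interpolant by `O(r²)`, and `r = n^(-1/5)` leaves `O(n^(1/5) log n)` kinks: the total potential is
`O(log n)`, since only the part of the graph above the level `-(4/5) log n` matters. Below that
level the spline continues linearly with slopes bounded away from `0`, so its tails carry mass
`O(n^(-4/5))` and the cutoff `(8/(5α)) log n` makes truncation to `[A, B]` harmless. A uniform error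
`ε` in the log-density gives a squared Hellinger error `O(ε²)`.
-/

noncomputable section

/-! ### Laplace kernels -/

/-- The unnormalised Laplace density `e^{-c|x-τ|}` centred at `τ`: the shape of every envelope and
of every error term below. -/
def laplaceKernel (c τ x : ℝ) : ℝ := exp (-(c * |x - τ|))

lemma laplaceKernel_pos (c τ x : ℝ) : 0 < laplaceKernel c τ x := exp_pos _

@[simp]
lemma laplaceKernel_self (c x : ℝ) : laplaceKernel c x x = 1 := by simp [laplaceKernel]

lemma laplaceKernel_neg (c τ x : ℝ) : laplaceKernel c (-τ) (-x) = laplaceKernel c τ x := by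
  rw [laplaceKernel, laplaceKernel, neg_sub_neg, abs_sub_comm]

lemma integral_laplaceKernel {c : ℝ} (hc : 0 < c) (τ : ℝ) : ∫ x, laplaceKernel c τ x = 2 / c := by
  have half_line := integral_exp_mul_Ioi (neg_lt_zero.2 hc) 0
  simp only [laplaceKernel, ← neg_mul]
  rw [integral_sub_right_eq_self (fun x : ℝ ↦ exp (-c * |x|)) τ,
    integral_comp_abs (f := fun x ↦ exp (-c * x)), half_line]
  simp [div_eq_mul_inv]

lemma integrable_laplaceKernel {c : ℝ} (hc : 0 < c) (τ : ℝ) : Integrable (laplaceKernel c τ) :=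
  .of_integral_ne_zero <| by rw [integral_laplaceKernel hc]; positivity

lemma exp_sub_mul_abs_eq (α β x : ℝ) :
    exp (β - α * |x|) = exp β * laplaceKernel α 0 x := by
  rw [laplaceKernel, sub_zero, ← exp_add, sub_eq_add_neg]

/-! ### Log-concave functions -/

namespace IsLogConcaveFn

variable {f : ℝ → ℝ}

lemma mul_exp (hf : IsLogConcaveFn f) (f_nonneg : ∀ x, 0 ≤ f x) (G : ℝ) :
    IsLogConcaveFn fun x ↦ f x * exp (G * x) := by
  intro x y t ht₀ ht₁
  have exp_affine :
      exp (G * (t * x + (1 - t) * y)) = exp (G * x) ^ t * exp (G * y) ^ (1 - t) := by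
    rw [← exp_mul, ← exp_mul, ← exp_add]
    ring_nf
  calc (f x * exp (G * x)) ^ t * (f y * exp (G * y)) ^ (1 - t)
      = (f x ^ t * f y ^ (1 - t)) * (exp (G * x) ^ t * exp (G * y) ^ (1 - t)) := by
        rw [mul_rpow (f_nonneg x) (exp_pos _).le, mul_rpow (f_nonneg y) (exp_pos _).le]
        ring
    _ ≤ f (t * x + (1 - t) * y) * exp (G * (t * x + (1 - t) * y)) := by
        rw [exp_affine]
        gcongr
        exact hf x y t ht₀ ht₁

lemma comp_neg (hf : IsLogConcaveFn f) : IsLogConcaveFn fun x ↦ f (-x) := by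
  intro x y t ht₀ ht₁
  convert hf (-x) (-y) t ht₀ ht₁ using 2
  ring

lemma quasiconcaveOn (hf : IsLogConcaveFn f) (f_nonneg : ∀ x, 0 ≤ f x) :
    QuasiconcaveOn ℝ univ f := by
  refine quasiconcaveOn_iff_min_le.2 ⟨convex_univ, fun x _ y _ a b ha hb hab ↦ ?_⟩
  obtain rfl : b = 1 - a := by linarith
  have min_nonneg : 0 ≤ min (f x) (f y) := le_min (f_nonneg x) (f_nonneg y)
  calc min (f x) (f y) = min (f x) (f y) ^ a * min (f x) (f y) ^ (1 - a) := by
        rw [← rpow_add_of_nonneg min_nonneg ha hb, hab, rpow_one]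
    _ ≤ f x ^ a * f y ^ (1 - a) := by
        gcongr
        exacts [rpow_nonneg (f_nonneg x) a, min_le_left _ _, min_le_right _ _]
    _ ≤ f (a • x + (1 - a) • y) := hf x y a ha (by linarith)

lemma concaveOn_log (hf : IsLogConcaveFn f) (f_pos : ∀ x, 0 < f x) :
    ConcaveOn ℝ univ fun x ↦ log (f x) := by
  refine ⟨convex_univ, fun x _ y _ a b ha hb hab ↦ ?_⟩
  obtain rfl : b = 1 - a := by linarith
  have powers_pos : 0 < f x ^ a * f y ^ (1 - a) := by have := f_pos x; have := f_pos y; positivity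
  have log_le := log_le_log powers_pos (hf x y a ha (by linarith))
  rwa [log_mul (rpow_pos_of_pos (f_pos x) _).ne' (rpow_pos_of_pos (f_pos y) _).ne',
    log_rpow (f_pos x), log_rpow (f_pos y)] at log_le

end IsLogConcaveFn

/-! ### Regularisation by sup-convolution -/

/-- The sup-convolution of `f` with the Laplace kernel of rate `G`. On the logarithmic scale it is
the least `G`-Lipschitz majorant of `log f`. -/
def expSupConv (G : ℝ) (f : ℝ → ℝ) (x : ℝ) : ℝ := ⨆ y, f y * laplaceKernel G y x

section ExpSupConv

variable {α β G : ℝ} {f : ℝ → ℝ}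

lemma mul_laplaceKernel_le (hα : 0 ≤ α) (hαG : α ≤ G) (f_le : ∀ x, f x ≤ exp (β - α * |x|))
    (y x : ℝ) : f y * laplaceKernel G y x ≤ exp (β - α * |x|) := by
  calc f y * laplaceKernel G y x ≤ exp (β - α * |y|) * exp (-(α * |x - y|)) := by
        gcongr
        exacts [(laplaceKernel_pos G y x).le, f_le y, exp_le_exp.2 (by gcongr)]
    _ = exp (β - α * (|y| + |x - y|)) := by rw [← exp_add]; ring_nf
    _ ≤ exp (β - α * |x|) := by
        gcongr
        simpa using abs_add_le y (x - y)

lemma expSupConv_le (hα : 0 ≤ α) (hαG : α ≤ G) (f_le : ∀ x, f x ≤ exp (β - α * |x|)) (x : ℝ) :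
    expSupConv G f x ≤ exp (β - α * |x|) :=
  ciSup_le fun y ↦ mul_laplaceKernel_le hα hαG f_le y x

lemma bddAbove_range_mul_laplaceKernel (hG : 0 ≤ G) (f_le : ∀ x, f x ≤ exp β) (x : ℝ) :
    BddAbove (range fun y ↦ f y * laplaceKernel G y x) := by
  refine ⟨exp β, forall_mem_range.2 fun y ↦ ?_⟩
  simpa using mul_laplaceKernel_le (α := 0) (β := β) le_rfl hG (by simpa using f_le) y x

lemma mul_laplaceKernel_le_expSupConv (hG : 0 ≤ G) (f_le : ∀ x, f x ≤ exp β) (y x : ℝ) :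
    f y * laplaceKernel G y x ≤ expSupConv G f x :=
  le_ciSup (bddAbove_range_mul_laplaceKernel hG f_le x) y

lemma le_expSupConv (hG : 0 ≤ G) (f_le : ∀ x, f x ≤ exp β) (x : ℝ) : f x ≤ expSupConv G f x := by
  simpa using mul_laplaceKernel_le_expSupConv hG f_le x x

lemma expSupConv_pos (hG : 0 ≤ G) (f_le : ∀ x, f x ≤ exp β) {y : ℝ} (hy : 0 < f y) (x : ℝ) :
    0 < expSupConv G f x :=
  (mul_pos hy (laplaceKernel_pos G y x)).trans_le (mul_laplaceKernel_le_expSupConv hG f_le y x)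

lemma expSupConv_le_mul_exp (hG : 0 ≤ G) (f_nonneg : ∀ x, 0 ≤ f x) (f_le : ∀ x, f x ≤ exp β)
    (x y : ℝ) : expSupConv G f x ≤ expSupConv G f y * exp (G * |x - y|) := by
  refine ciSup_le fun z ↦ ?_
  calc f z * laplaceKernel G z x
      ≤ f z * (laplaceKernel G z y * exp (G * |x - y|)) := by
        rw [laplaceKernel, laplaceKernel, ← exp_add]
        gcongr
        · exact f_nonneg z
        · have triangle : |y - z| ≤ |x - y| + |x - z| := by
            simpa [abs_sub_comm x y] using abs_sub_le y x z
          nlinarith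
    _ = f z * laplaceKernel G z y * exp (G * |x - y|) := by ring
    _ ≤ expSupConv G f y * exp (G * |x - y|) := by
        gcongr
        exact mul_laplaceKernel_le_expSupConv hG f_le z y

lemma laplaceKernel_rpow_mul_rpow_le (hG : 0 ≤ G) (x₁ x₂ y₁ y₂ : ℝ) {t : ℝ} (ht₀ : 0 ≤ t)
    (ht₁ : t ≤ 1) :
    laplaceKernel G y₁ x₁ ^ t * laplaceKernel G y₂ x₂ ^ (1 - t) ≤
      laplaceKernel G (t * y₁ + (1 - t) * y₂) (t * x₁ + (1 - t) * x₂) := by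
  have abs_convex : |t * (x₁ - y₁) + (1 - t) * (x₂ - y₂)| ≤
      t * |x₁ - y₁| + (1 - t) * |x₂ - y₂| := by
    refine (abs_add_le _ _).trans_eq ?_
    rw [abs_mul, abs_mul, abs_of_nonneg ht₀, abs_of_nonneg (sub_nonneg.2 ht₁)]
  have difference : t * x₁ + (1 - t) * x₂ - (t * y₁ + (1 - t) * y₂) =
      t * (x₁ - y₁) + (1 - t) * (x₂ - y₂) := by ring
  simp only [laplaceKernel]
  rw [← exp_mul, ← exp_mul, ← exp_add, exp_le_exp, difference]
  linarith [mul_le_mul_of_nonneg_left abs_convex hG]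

lemma IsLogConcaveFn.mul_laplaceKernel_rpow_le_expSupConv (hf : IsLogConcaveFn f) (hG : 0 ≤ G)
    (f_nonneg : ∀ x, 0 ≤ f x) (f_le : ∀ x, f x ≤ exp β) (x₁ x₂ y₁ y₂ : ℝ) {t : ℝ} (ht₀ : 0 ≤ t)
    (ht₁ : t ≤ 1) :
    (f y₁ * laplaceKernel G y₁ x₁) ^ t * (f y₂ * laplaceKernel G y₂ x₂) ^ (1 - t) ≤
      expSupConv G f (t * x₁ + (1 - t) * x₂) := by
  have kernel₁ := (laplaceKernel_pos G y₁ x₁).le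
  have kernel₂ := (laplaceKernel_pos G y₂ x₂).le
  calc (f y₁ * laplaceKernel G y₁ x₁) ^ t * (f y₂ * laplaceKernel G y₂ x₂) ^ (1 - t)
      = (f y₁ ^ t * f y₂ ^ (1 - t)) *
          (laplaceKernel G y₁ x₁ ^ t * laplaceKernel G y₂ x₂ ^ (1 - t)) := by
        rw [mul_rpow (f_nonneg _) kernel₁, mul_rpow (f_nonneg _) kernel₂]
        ring
    _ ≤ f (t * y₁ + (1 - t) * y₂) *
          laplaceKernel G (t * y₁ + (1 - t) * y₂) (t * x₁ + (1 - t) * x₂) :=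
        mul_le_mul (hf y₁ y₂ t ht₀ ht₁)
          (laplaceKernel_rpow_mul_rpow_le hG x₁ x₂ y₁ y₂ ht₀ ht₁) (by positivity) (f_nonneg _)
    _ ≤ expSupConv G f (t * x₁ + (1 - t) * x₂) := mul_laplaceKernel_le_expSupConv hG f_le _ _

lemma IsLogConcaveFn.isLogConcaveFn_expSupConv (hf : IsLogConcaveFn f) (hG : 0 ≤ G)
    (f_nonneg : ∀ x, 0 ≤ f x) (f_le : ∀ x, f x ≤ exp β) {y : ℝ} (hy : 0 < f y) :
    IsLogConcaveFn (expSupConv G f) := by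
  intro x₁ x₂ t ht₀ ht₁
  set v := expSupConv G f
  have v_pos : ∀ x, 0 < v x := expSupConv_pos hG f_le hy
  have product_pos : 0 < v x₁ ^ t * v x₂ ^ (1 - t) := by
    have := v_pos x₁; have := v_pos x₂; positivity
  refine le_of_forall_lt_imp_le_of_dense fun a ha ↦ ?_
  obtain ha₀ | ha₀ := le_or_gt a 0
  · exact ha₀.trans (v_pos _).le
  set r := a / (v x₁ ^ t * v x₂ ^ (1 - t))
  have r_pos : 0 < r := by positivity
  have nearly_attained : ∀ x, ∃ y, r * v x < f y * laplaceKernel G y x := fun x ↦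
    exists_lt_of_lt_ciSup (mul_lt_of_lt_one_left (v_pos x) ((div_lt_one product_pos).2 ha))
  obtain ⟨y₁, hy₁⟩ := nearly_attained x₁
  obtain ⟨y₂, hy₂⟩ := nearly_attained x₂
  have rv₁ := mul_nonneg r_pos.le (v_pos x₁).le
  have rv₂ := mul_nonneg r_pos.le (v_pos x₂).le
  calc a = r * (v x₁ ^ t * v x₂ ^ (1 - t)) := (div_mul_cancel₀ a product_pos.ne').symm
    _ = r ^ (t + (1 - t)) * (v x₁ ^ t * v x₂ ^ (1 - t)) := by rw [add_sub_cancel, rpow_one]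
    _ = (r * v x₁) ^ t * (r * v x₂) ^ (1 - t) := by
        rw [mul_rpow r_pos.le (v_pos _).le, mul_rpow r_pos.le (v_pos _).le, rpow_add r_pos]
        ring
    _ ≤ (f y₁ * laplaceKernel G y₁ x₁) ^ t * (f y₂ * laplaceKernel G y₂ x₂) ^ (1 - t) := by
        gcongr
        exact rpow_nonneg (rv₁.trans hy₁.le) t
    _ ≤ v (t * x₁ + (1 - t) * x₂) :=
        hf.mul_laplaceKernel_rpow_le_expSupConv hG f_nonneg f_le _ _ _ _ ht₀ ht₁

/- Once a quasiconcave `k` has descended at `x`, its supremum is at most `e^{β + G x}`; the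
threshold `τ` is the point where that envelope equals the supremum. -/
lemma exists_threshold_of_quasiconcaveOn {k : ℝ → ℝ} (hk : QuasiconcaveOn ℝ univ k)
    (k_nonneg : ∀ x, 0 ≤ k x) (hG : 0 < G) (k_le : ∀ x, k x ≤ exp (β + G * x)) :
    ∃ τ, ∀ x, (∀ y ≤ x, k y ≤ k x) ∨ (τ ≤ x ∧ ∀ y, k y ≤ exp (β + G * τ)) := by
  have le_of_descended : ∀ x, (¬ ∀ y ≤ x, k y ≤ k x) → ∀ y, k y ≤ exp (β + G * x) := by
    intro x hx y
    push Not at hx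
    obtain ⟨w, hwx, hkw⟩ := hx
    obtain hyx | hxy := le_total y x
    · exact (k_le y).trans (by gcongr)
    · refine le_trans ?_ (k_le x)
      by_contra! hky
      have x_mem := (hk (min (k w) (k y))).ordConnected.out ⟨mem_univ w, min_le_left _ _⟩
        ⟨mem_univ y, min_le_right _ _⟩ ⟨hwx, hxy⟩
      exact (lt_min hkw hky).not_ge x_mem.2
  by_cases monotone : ∀ x, ∀ y ≤ x, k y ≤ k x
  · exact ⟨0, fun x ↦ .inl (monotone x)⟩
  push Not at monotone
  obtain ⟨x₀, y₀, hyx₀, hky₀⟩ := monotone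
  have bdd : BddAbove (range k) :=
    ⟨_, forall_mem_range.2 <| le_of_descended x₀ fun h ↦ (h y₀ hyx₀).not_gt hky₀⟩
  have sup_pos : 0 < ⨆ y, k y := ((k_nonneg x₀).trans_lt hky₀).trans_le (le_ciSup bdd y₀)
  have exp_threshold : exp (β + G * ((log (⨆ y, k y) - β) / G)) = ⨆ y, k y := by
    rw [mul_div_cancel₀ _ hG.ne', add_sub_cancel, exp_log sup_pos]
  refine ⟨(log (⨆ y, k y) - β) / G, fun x ↦ or_iff_not_imp_left.2 fun hx ↦ ⟨?_, fun y ↦ ?_⟩⟩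
  · have := exp_threshold.trans_le (ciSup_le (le_of_descended x hx))
    exact le_of_mul_le_mul_left (by linarith [exp_le_exp.1 this]) hG
  · exact (le_ciSup bdd y).trans_eq exp_threshold.symm

lemma IsLogConcaveFn.exists_mul_laplaceKernel_sub_le (hf : IsLogConcaveFn f) (hG : 0 < G)
    (f_nonneg : ∀ x, 0 ≤ f x) (f_le : ∀ x, f x ≤ exp β) :
    ∃ τ, ∀ x, ∀ y ≤ x, f y * laplaceKernel G y x - f x ≤ exp β * laplaceKernel G τ x := by
  set k : ℝ → ℝ := fun x ↦ f x * exp (G * x)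
  have k_nonneg : ∀ x, 0 ≤ k x := fun x ↦ mul_nonneg (f_nonneg x) (exp_pos _).le
  have k_le : ∀ x, k x ≤ exp (β + G * x) := fun x ↦ by
    rw [exp_add]
    exact mul_le_mul_of_nonneg_right (f_le x) (exp_pos _).le
  have tilt : ∀ x, ∀ y ≤ x, f y * laplaceKernel G y x = k y * exp (-(G * x)) := by
    intro x y hyx
    rw [laplaceKernel, abs_of_nonneg (sub_nonneg.2 hyx), mul_assoc, ← exp_add]
    ring_nf
  obtain ⟨τ, hτ⟩ := exists_threshold_of_quasiconcaveOn
    ((hf.mul_exp f_nonneg G).quasiconcaveOn k_nonneg) k_nonneg hG k_le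
  refine ⟨τ, fun x y hyx ↦ ?_⟩
  rw [tilt x y hyx]
  obtain not_descended | ⟨hτx, k_le_sup⟩ := hτ x
  · have at_self : f x = k x * exp (-(G * x)) := by simpa using tilt x x le_rfl
    rw [at_self, ← sub_mul]
    exact (mul_nonpos_of_nonpos_of_nonneg (sub_nonpos.2 (not_descended y hyx))
      (exp_pos _).le).trans (mul_pos (exp_pos _) (laplaceKernel_pos _ _ _)).le
  · calc k y * exp (-(G * x)) - f x ≤ exp (β + G * τ) * exp (-(G * x)) := by
          linarith [f_nonneg x, mul_le_mul_of_nonneg_right (k_le_sup y) (exp_pos (-(G * x))).le]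
      _ = exp β * laplaceKernel G τ x := by
          rw [laplaceKernel, abs_of_nonneg (sub_nonneg.2 hτx), ← exp_add, ← exp_add]
          ring_nf

lemma IsLogConcaveFn.exists_expSupConv_sub_le (hf : IsLogConcaveFn f) (hG : 0 < G)
    (f_nonneg : ∀ x, 0 ≤ f x) (f_le : ∀ x, f x ≤ exp β) :
    ∃ τ₁ τ₂, ∀ x, expSupConv G f x - f x ≤
      exp β * laplaceKernel G τ₁ x + exp β * laplaceKernel G τ₂ x := by
  obtain ⟨τ₁, from_left⟩ := hf.exists_mul_laplaceKernel_sub_le hG f_nonneg f_le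
  obtain ⟨τ₂, from_right⟩ :=
    hf.comp_neg.exists_mul_laplaceKernel_sub_le hG (fun x ↦ f_nonneg (-x)) (fun x ↦ f_le (-x))
  refine ⟨τ₁, -τ₂, fun x ↦ sub_le_iff_le_add.2 (ciSup_le fun y ↦ ?_)⟩
  have nonneg : ∀ τ, 0 ≤ exp β * laplaceKernel G τ x := fun τ ↦
    mul_nonneg (exp_pos _).le (laplaceKernel_pos _ _ _).le
  obtain hyx | hxy := le_total y x
  · linarith [from_left x y hyx, nonneg (-τ₂)]
  · have := from_right (-x) (-y) (neg_le_neg hxy)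
    rw [neg_neg, neg_neg, laplaceKernel_neg, ← neg_neg τ₂, laplaceKernel_neg] at this
    linarith [nonneg τ₁]

end ExpSupConv

lemma IsDensityFn.exists_pos_le {α β : ℝ} {f : ℝ → ℝ} (hf : IsDensityFn f) (hα : 0 < α)
    (f_le : ∀ x, f x ≤ exp (β - α * |x|)) : ∃ x, (α / 8) ^ 2 * exp (-β) ≤ f x := by
  obtain ⟨-, f_nonneg, integral_f⟩ := hf
  by_contra! f_small
  have f_le_kernel : ∀ x, f x ≤ α / 8 * laplaceKernel (α / 2) 0 x := fun x ↦ by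
    refine le_of_sq_le_sq ?_ (by have := laplaceKernel_pos (α / 2) 0 x; positivity)
    calc f x ^ 2 ≤ ((α / 8) ^ 2 * exp (-β)) * exp (β - α * |x|) := by
          rw [sq]
          exact mul_le_mul (f_small x).le (f_le x) (f_nonneg x) (by positivity)
      _ = (α / 8 * laplaceKernel (α / 2) 0 x) ^ 2 := by
          rw [mul_pow, laplaceKernel, ← exp_nat_mul, mul_assoc, ← exp_add, sub_zero]
          push_cast
          ring_nf
  have half_mass : ∫ x, f x ≤ α / 8 * (2 / (α / 2)) := by
    rw [← integral_laplaceKernel (by positivity) 0, ← integral_const_mul]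
    exact integral_mono_of_nonneg (.of_forall f_nonneg)
      ((integrable_laplaceKernel (by positivity) 0).const_mul _) (.of_forall f_le_kernel)
  have : α / 8 * (2 / (α / 2)) = 1 / 2 := by field_simp; norm_num
  linarith

lemma integral_exp_sub_le_of_le_laplaceKernel {u f : ℝ → ℝ} {β G τ₁ τ₂ : ℝ} (hG : 0 < G)
    (f_le : ∀ x, f x ≤ exp (u x))
    (gap_le : ∀ x, exp (u x) - f x ≤
      exp β * laplaceKernel G τ₁ x + exp β * laplaceKernel G τ₂ x) :
    ∫ x, (exp (u x) - f x) ≤ 4 * exp β / G := by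
  have integrable₁ := (integrable_laplaceKernel hG τ₁).const_mul (exp β)
  have integrable₂ := (integrable_laplaceKernel hG τ₂).const_mul (exp β)
  calc ∫ x, (exp (u x) - f x)
      ≤ ∫ x, (exp β * laplaceKernel G τ₁ x + exp β * laplaceKernel G τ₂ x) :=
        integral_mono_of_nonneg (.of_forall fun x ↦ sub_nonneg.2 (f_le x))
          (integrable₁.add integrable₂) (.of_forall gap_le)
    _ = 4 * exp β / G := by
        rw [integral_add integrable₁ integrable₂, integral_const_mul, integral_const_mul,
          integral_laplaceKernel hG, integral_laplaceKernel hG]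
        ring

lemma IsLogConcaveFn.exists_lipschitz_concave_majorant {α β G : ℝ} {f : ℝ → ℝ}
    (hf : IsLogConcaveFn f) (f_density : IsDensityFn f) (hα : 0 < α) (hαG : α ≤ G)
    (f_le : ∀ x, f x ≤ exp (β - α * |x|)) :
    ∃ u : ℝ → ℝ, ConcaveOn ℝ univ u ∧ (∀ x y, u x - u y ≤ G * |x - y|) ∧
      (∀ x, f x ≤ exp (u x)) ∧ (∀ x, u x ≤ β - α * |x|) ∧
      ∫ x, (exp (u x) - f x) ≤ 4 * exp β / G := by
  have hG := hα.trans_le hαG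
  have f_nonneg := f_density.2.1
  have f_le_const : ∀ x, f x ≤ exp β := fun x ↦
    (f_le x).trans (exp_le_exp.2 (sub_le_self _ (by positivity)))
  obtain ⟨y, hy⟩ := f_density.exists_pos_le hα f_le
  have hy : 0 < f y := (by positivity : 0 < (α / 8) ^ 2 * exp (-β)).trans_le hy
  have v_pos := expSupConv_pos hG.le f_le_const hy
  have exp_log_v : ∀ x, exp (log (expSupConv G f x)) = expSupConv G f x := fun x ↦
    exp_log (v_pos x)
  have f_le_v : ∀ x, f x ≤ exp (log (expSupConv G f x)) := fun x ↦ by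
    rw [exp_log_v]
    exact le_expSupConv hG.le f_le_const x
  obtain ⟨τ₁, τ₂, gap_le⟩ := hf.exists_expSupConv_sub_le hG f_nonneg f_le_const
  refine ⟨fun x ↦ log (expSupConv G f x),
    (hf.isLogConcaveFn_expSupConv hG.le f_nonneg f_le_const hy).concaveOn_log v_pos,
    fun x y ↦ ?_, f_le_v, fun x ↦ ?_,
    integral_exp_sub_le_of_le_laplaceKernel hG f_le_v fun x ↦ (exp_log_v x).symm ▸ gap_le x⟩
  · rw [← log_div (v_pos x).ne' (v_pos y).ne', log_le_iff_le_exp (div_pos (v_pos x) (v_pos y)),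
      div_le_iff₀' (v_pos y)]
    exact expSupConv_le_mul_exp hG.le f_nonneg f_le_const x y
  · exact (log_le_iff_le_exp (v_pos x)).2 (expSupConv_le hα.le hαG f_le x)

/-! ### Clustering weighted hinges -/

/-- The convex piecewise affine function of `y` with a kink of size `w i` at each `t i`, `i ∈ s`,
vanishing to the left of all the kinks. -/
def hingeSum {ι : Type*} (s : Finset ι) (w t : ι → ℝ) (y : ℝ) : ℝ :=
  ∑ i ∈ s, w i * max (y - t i) 0

lemma convexOn_hinge (y : ℝ) : ConvexOn ℝ univ fun t : ℝ ↦ max (y - t) 0 :=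
  ((convexOn_const y convex_univ).sub (concaveOn_id convex_univ)).sup
    (convexOn_const 0 convex_univ)

section HingeSum

variable {ι : Type*} {s : Finset ι} {w t : ι → ℝ} {y : ℝ}

lemma hingeSum_eq_zero (hy : ∀ i ∈ s, y ≤ t i) : hingeSum s w t y = 0 :=
  Finset.sum_eq_zero fun i hi ↦ by rw [max_eq_right (sub_nonpos.2 (hy i hi)), mul_zero]

lemma hingeSum_eq_sum_mul_sub (hy : ∀ i ∈ s, t i ≤ y) :
    hingeSum s w t y = ∑ i ∈ s, w i * (y - t i) :=
  Finset.sum_congr rfl fun i hi ↦ by rw [max_eq_left (sub_nonneg.2 (hy i hi))]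

lemma sum_mul_sub_eq : ∑ i ∈ s, w i * (y - t i) = (∑ i ∈ s, w i) * y - ∑ i ∈ s, w i * t i := by
  simp only [mul_sub, Finset.sum_sub_distrib, Finset.sum_mul]

lemma sum_mul_centerMass (mass_pos : 0 < ∑ i ∈ s, w i) :
    (∑ i ∈ s, w i) * s.centerMass w t = ∑ i ∈ s, w i * t i := by
  simp [Finset.centerMass, mass_pos.ne']

lemma sum_mul_hinge_centerMass_le (w_nonneg : ∀ i ∈ s, 0 ≤ w i) (mass_pos : 0 < ∑ i ∈ s, w i) :
    (∑ i ∈ s, w i) * max (y - s.centerMass w t) 0 ≤ hingeSum s w t y := by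
  have jensen := (convexOn_hinge y).map_centerMass_le w_nonneg mass_pos
    (fun i _ ↦ mem_univ (t i))
  exact (mul_le_mul_of_nonneg_left jensen mass_pos.le).trans_eq (sum_mul_centerMass mass_pos)

lemma hingeSum_eq_sum_mul_hinge_centerMass (w_nonneg : ∀ i ∈ s, 0 ≤ w i)
    (mass_pos : 0 < ∑ i ∈ s, w i) (one_sided : (∀ i ∈ s, t i ≤ y) ∨ ∀ i ∈ s, y ≤ t i) :
    hingeSum s w t y = (∑ i ∈ s, w i) * max (y - s.centerMass w t) 0 := by
  obtain ht | ht := one_sided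
  · have center_le : s.centerMass w t ≤ y := (convex_Iic y).centerMass_mem w_nonneg mass_pos ht
    rw [hingeSum_eq_sum_mul_sub ht, max_eq_left (sub_nonneg.2 center_le), mul_sub,
      sum_mul_centerMass mass_pos, sum_mul_sub_eq]
  · have le_center : y ≤ s.centerMass w t := (convex_Ici y).centerMass_mem w_nonneg mass_pos ht
    rw [hingeSum_eq_zero ht, max_eq_right (sub_nonpos.2 le_center), mul_zero]

lemma hingeSum_sub_mass_mul_hinge_le (w_nonneg : ∀ i ∈ s, 0 ≤ w i)
    (mass_pos : 0 < ∑ i ∈ s, w i) {a b : ℝ} (ht : ∀ i ∈ s, t i ∈ Icc a b) :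
    hingeSum s w t y - (∑ i ∈ s, w i) * max (y - s.centerMass w t) 0 ≤
      (b - a) * ∑ i ∈ s, w i := by
  obtain ⟨i, hi⟩ : s.Nonempty := Finset.nonempty_of_sum_ne_zero mass_pos.ne'
  have diam_nonneg : 0 ≤ b - a := sub_nonneg.2 ((ht i hi).1.trans (ht i hi).2)
  obtain hby | hyb := le_total b y
  · rw [hingeSum_eq_sum_mul_hinge_centerMass w_nonneg mass_pos
      (.inl fun i hi ↦ (ht i hi).2.trans hby), sub_self]
    positivity
  · have hinge_le : ∀ i ∈ s, max (y - t i) 0 ≤ b - a := fun i hi ↦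
      max_le (sub_le_sub hyb (ht i hi).1) diam_nonneg
    calc _ ≤ hingeSum s w t y := sub_le_self _ (by positivity)
      _ ≤ ∑ i ∈ s, w i * (b - a) := Finset.sum_le_sum fun i hi ↦
          mul_le_mul_of_nonneg_left (hinge_le i hi) (w_nonneg i hi)
      _ = (b - a) * ∑ i ∈ s, w i := by rw [← Finset.sum_mul, mul_comm]

end HingeSum

section Cluster

variable {ι Λ : Type*} [LinearOrder Λ] {I : Finset ι} {w t : ι → ℝ} {κ : ι → Λ} {δ ε : ℝ}

/-- The total weight of the indices in `I` labelled `k`. -/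
def clusterMass (I : Finset ι) (w : ι → ℝ) (κ : ι → Λ) (k : Λ) : ℝ := ∑ i ∈ I with κ i = k, w i

/-- The barycentre of the positions of the indices in `I` labelled `k`. -/
def clusterCenter (I : Finset ι) (w t : ι → ℝ) (κ : ι → Λ) (k : Λ) : ℝ :=
  (I.filter (κ · = k)).centerMass w t

lemma clusterMass_pos (w_pos : ∀ i ∈ I, 0 < w i) {k : Λ} (hk : k ∈ I.image κ) :
    0 < clusterMass I w κ k := by
  obtain ⟨i, hi, rfl⟩ := Finset.mem_image.1 hk
  exact Finset.sum_pos (fun j hj ↦ w_pos j (Finset.mem_filter.1 hj).1)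
    ⟨i, Finset.mem_filter.2 ⟨hi, rfl⟩⟩

lemma clusterCenter_mem (w_pos : ∀ i ∈ I, 0 < w i) {k : Λ} (hk : k ∈ I.image κ) {S : Set ℝ}
    (hS : Convex ℝ S) (ht : ∀ i ∈ I, κ i = k → t i ∈ S) : clusterCenter I w t κ k ∈ S :=
  hS.centerMass_mem (fun i hi ↦ (w_pos i (Finset.mem_filter.1 hi).1).le) (clusterMass_pos w_pos hk)
    fun i hi ↦ ht i (Finset.mem_filter.1 hi).1 (Finset.mem_filter.1 hi).2

lemma clusterCenter_add_le (w_pos : ∀ i ∈ I, 0 < w i)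
    (separated : ∀ i ∈ I, ∀ j ∈ I, κ i < κ j → t i + δ ≤ t j) {k l : Λ} (hk : k ∈ I.image κ)
    (hl : l ∈ I.image κ) (hkl : k < l) :
    clusterCenter I w t κ k + δ ≤ clusterCenter I w t κ l := by
  have center_le : ∀ j ∈ I, κ j = l → clusterCenter I w t κ k ≤ t j - δ := fun j hj hjl ↦
    clusterCenter_mem w_pos hk (convex_Iic _) fun i hi hik ↦
      le_sub_iff_add_le.2 (separated i hi j hj (by rwa [hik, hjl]))
  exact clusterCenter_mem w_pos hl (convex_Ici _) fun j hj hjl ↦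
    mem_Ici.2 (le_sub_iff_add_le.1 (center_le j hj hjl))

lemma sum_clusterMass : ∑ k ∈ I.image κ, clusterMass I w κ k = ∑ i ∈ I, w i :=
  Finset.sum_fiberwise_of_maps_to (fun _ ↦ Finset.mem_image_of_mem κ) w

lemma sum_clusterMass_mul_clusterCenter (w_pos : ∀ i ∈ I, 0 < w i) :
    ∑ k ∈ I.image κ, clusterMass I w κ k * clusterCenter I w t κ k = ∑ i ∈ I, w i * t i := by
  rw [← Finset.sum_fiberwise_of_maps_to (fun _ ↦ Finset.mem_image_of_mem κ) fun i ↦ w i * t i]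
  exact Finset.sum_congr rfl fun k hk ↦ sum_mul_centerMass (clusterMass_pos w_pos hk)

/-- What `hingeSum` loses at `y` when the indices labelled `k` are merged into their barycentre. -/
def clusterGap (I : Finset ι) (w t : ι → ℝ) (κ : ι → Λ) (y : ℝ) (k : Λ) : ℝ :=
  hingeSum (I.filter (κ · = k)) w t y -
    clusterMass I w κ k * max (y - clusterCenter I w t κ k) 0

lemma sum_clusterGap (y : ℝ) :
    ∑ k ∈ I.image κ, clusterGap I w t κ y k = hingeSum I w t y -
      hingeSum (I.image κ) (clusterMass I w κ) (clusterCenter I w t κ) y := by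
  simp only [clusterGap, Finset.sum_sub_distrib, hingeSum]
  rw [Finset.sum_fiberwise_of_maps_to (fun _ ↦ Finset.mem_image_of_mem κ)]

lemma clusterGap_nonneg (w_pos : ∀ i ∈ I, 0 < w i) (y : ℝ) {k : Λ} (hk : k ∈ I.image κ) :
    0 ≤ clusterGap I w t κ y k :=
  sub_nonneg.2 <| sum_mul_hinge_centerMass_le
    (fun i hi ↦ (w_pos i (Finset.mem_filter.1 hi).1).le) (clusterMass_pos w_pos hk)

lemma clusterGap_le (w_pos : ∀ i ∈ I, 0 < w i) (y : ℝ) {k : Λ} (hk : k ∈ I.image κ) {a b : ℝ}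
    (ht : ∀ i ∈ I, κ i = k → t i ∈ Icc a b) :
    clusterGap I w t κ y k ≤ (b - a) * clusterMass I w κ k :=
  hingeSum_sub_mass_mul_hinge_le (fun i hi ↦ (w_pos i (Finset.mem_filter.1 hi).1).le)
    (clusterMass_pos w_pos hk)
    fun i hi ↦ ht i (Finset.mem_filter.1 hi).1 (Finset.mem_filter.1 hi).2

lemma exists_lt_and_lt_of_clusterGap_ne_zero (w_pos : ∀ i ∈ I, 0 < w i) {y : ℝ} {k : Λ}
    (hk : k ∈ I.image κ) (gap_ne : clusterGap I w t κ y k ≠ 0) :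
    (∃ i ∈ I, κ i = k ∧ t i < y) ∧ ∃ i ∈ I, κ i = k ∧ y < t i := by
  contrapose! gap_ne
  refine sub_eq_zero.2 <| hingeSum_eq_sum_mul_hinge_centerMass
    (fun i hi ↦ (w_pos i (Finset.mem_filter.1 hi).1).le) (clusterMass_pos w_pos hk) ?_
  simp only [Finset.mem_filter, and_imp]
  by_cases some_left : ∃ i ∈ I, κ i = k ∧ t i < y
  · exact .inl (gap_ne some_left)
  · exact .inr (by simpa using some_left)

lemma sum_clusterGap_le (w_pos : ∀ i ∈ I, 0 < w i) (hε : 0 ≤ ε)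
    (ordered : ∀ i ∈ I, ∀ j ∈ I, κ i < κ j → t i ≤ t j)
    (gap_le : ∀ y, ∀ k ∈ I.image κ, clusterGap I w t κ y k ≤ ε) (y : ℝ) :
    ∑ k ∈ I.image κ, clusterGap I w t κ y k ≤ ε := by
  by_cases all_zero : ∀ k ∈ I.image κ, clusterGap I w t κ y k = 0
  · exact (Finset.sum_eq_zero all_zero).trans_le hε
  push Not at all_zero
  obtain ⟨k, hk, gap_k⟩ := all_zero
  obtain ⟨⟨i₁, hi₁, hik₁, ht₁⟩, i₂, hi₂, hik₂, ht₂⟩ :=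
    exists_lt_and_lt_of_clusterGap_ne_zero w_pos hk gap_k
  rw [Finset.sum_eq_single_of_mem k hk]
  · exact gap_le y k hk
  intro l hl hlk
  by_contra gap_l
  obtain ⟨⟨j₁, hj₁, hjl₁, hu₁⟩, j₂, hj₂, hjl₂, hu₂⟩ :=
    exists_lt_and_lt_of_clusterGap_ne_zero w_pos hl gap_l
  obtain hlk | hkl := hlk.lt_or_gt
  · linarith [ordered j₂ hj₂ i₁ hi₁ (by rwa [hjl₂, hik₁])]
  · linarith [ordered i₂ hi₂ j₁ hj₁ (by rwa [hik₂, hjl₁])]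

lemma exists_fin_hingeSum_approx (w_pos : ∀ i ∈ I, 0 < w i) (hδ : 0 ≤ δ) (hε : 0 ≤ ε)
    (separated : ∀ i ∈ I, ∀ j ∈ I, κ i < κ j → t i + δ ≤ t j)
    (small : ∀ k ∈ I.image κ, ∃ a b, (∀ i ∈ I, κ i = k → t i ∈ Icc a b) ∧
      (b - a) * clusterMass I w κ k ≤ ε) :
    ∃ D Z : Fin (I.image κ).card → ℝ, (∀ i, 0 < D i) ∧ (∀ i j, i < j → Z i + δ ≤ Z j) ∧
      (∀ S : Set ℝ, Convex ℝ S → (∀ i ∈ I, t i ∈ S) → ∀ i, Z i ∈ S) ∧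
      ∑ i, D i = ∑ i ∈ I, w i ∧ ∑ i, D i * Z i = ∑ i ∈ I, w i * t i ∧
      ∀ y, hingeSum I w t y - hingeSum Finset.univ D Z y ∈ Icc 0 ε := by
  set e := (I.image κ).orderEmbOfFin rfl
  have e_mem : ∀ i, e i ∈ I.image κ := (I.image κ).orderEmbOfFin_mem rfl
  have sum_e : ∀ g : Λ → ℝ, ∑ i, g (e i) = ∑ k ∈ I.image κ, g k := fun g ↦
    (Finset.sum_image e.injective.injOn).symm.trans
      (congrArg (∑ k ∈ ·, g k) ((I.image κ).image_orderEmbOfFin_univ rfl))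
  refine ⟨clusterMass I w κ ∘ e, clusterCenter I w t κ ∘ e,
    fun i ↦ clusterMass_pos w_pos (e_mem i),
    fun i j hij ↦ clusterCenter_add_le w_pos separated (e_mem i) (e_mem j) (e.strictMono hij),
    fun S hS ht i ↦ clusterCenter_mem w_pos (e_mem i) hS fun j hj _ ↦ ht j hj,
    (sum_e _).trans sum_clusterMass,
    (sum_e (fun k ↦ clusterMass I w κ k * clusterCenter I w t κ k)).trans
      (sum_clusterMass_mul_clusterCenter w_pos), fun y ↦ ?_⟩
  have hinge_e : hingeSum Finset.univ (clusterMass I w κ ∘ e) (clusterCenter I w t κ ∘ e) y =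
      hingeSum (I.image κ) (clusterMass I w κ) (clusterCenter I w t κ) y :=
    sum_e fun k ↦ clusterMass I w κ k * max (y - clusterCenter I w t κ k) 0
  rw [hinge_e, ← sum_clusterGap]
  refine ⟨Finset.sum_nonneg fun k hk ↦ clusterGap_nonneg w_pos y hk, ?_⟩
  refine sum_clusterGap_le w_pos hε (fun i hi j hj hij ↦ ?_) (fun y k hk ↦ ?_) y
  · linarith [separated i hi j hj hij]
  · obtain ⟨a, b, ht, diam_le⟩ := small k hk
    exact (clusterGap_le w_pos y hk ht).trans diam_le

end Cluster

/-! ### Concave splines -/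

/-- A concave piecewise affine function on the line, given by its value and slope to the left of
all kinks (extrapolated to `0`) and by the positions and sizes of its kinks, which are positive. -/
structure ConcaveSpline (N : ℕ) where
  knot : Fin N → ℝ
  jump : Fin N → ℝ
  height : ℝ
  slope : ℝ
  knot_pos : ∀ i, 0 < knot i
  jump_pos : ∀ i, 0 < jump i

namespace ConcaveSpline

variable {N : ℕ} (φ : ConcaveSpline N)

/-- The function described by the spline. -/
def eval (y : ℝ) : ℝ := φ.height + φ.slope * y - hingeSum Finset.univ φ.jump φ.knot y

/-- The slope to the right of all kinks. -/
def finalSlope : ℝ := φ.slope - ∑ i, φ.jump i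

lemma continuous_eval : Continuous φ.eval := by
  unfold eval hingeSum
  fun_prop

lemma concaveOn_eval : ConcaveOn ℝ univ φ.eval := by
  refine ⟨convex_univ, fun x _ y _ a b ha hb hab ↦ ?_⟩
  have hinge_convex : ∀ t, max (a * x + b * y - t) 0 ≤ a * max (x - t) 0 + b * max (y - t) 0 :=
    fun t ↦ max_le (by
      have split : a * x + b * y - t = a * (x - t) + b * (y - t) := by linear_combination t * hab
      rw [split]
      gcongr <;> exact le_max_left _ _) (by positivity)
  have hingeSum_convex : hingeSum Finset.univ φ.jump φ.knot (a * x + b * y) ≤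
      a * hingeSum Finset.univ φ.jump φ.knot x + b * hingeSum Finset.univ φ.jump φ.knot y := by
    simp only [hingeSum, Finset.mul_sum, ← Finset.sum_add_distrib]
    refine Finset.sum_le_sum fun i _ ↦ ?_
    linarith [mul_le_mul_of_nonneg_left (hinge_convex (φ.knot i)) (φ.jump_pos i).le]
  simp only [eval, smul_eq_mul]
  linear_combination hingeSum_convex + φ.height * hab

/-- The coefficient `γ₁` of the mixture representation `eval_eq_mixture`. -/
def mixtureCoeff : ℝ := ∑ i, φ.jump i * φ.knot i

/-- The mixture weights `pᵢ` of the representation `eval_eq_mixture`. -/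
def mixtureWeight (i : Fin N) : ℝ := φ.jump i * φ.knot i / φ.mixtureCoeff

lemma mixtureWeight_nonneg (i : Fin N) : 0 ≤ φ.mixtureWeight i := by
  have weight_nonneg : ∀ i, 0 ≤ φ.jump i * φ.knot i := fun i ↦
    (mul_pos (φ.jump_pos i) (φ.knot_pos i)).le
  exact div_nonneg (weight_nonneg i) (Finset.sum_nonneg fun i _ ↦ weight_nonneg i)

lemma mixtureCoeff_pos [NeZero N] : 0 < φ.mixtureCoeff :=
  Finset.sum_pos (fun i _ ↦ mul_pos (φ.jump_pos i) (φ.knot_pos i)) Finset.univ_nonempty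

lemma mixtureCoeff_le {b : ℝ} (knot_le : ∀ i, φ.knot i ≤ b) :
    φ.mixtureCoeff ≤ b * (φ.slope - φ.finalSlope) := by
  rw [finalSlope, sub_sub_cancel, Finset.mul_sum]
  refine Finset.sum_le_sum fun i _ ↦ ?_
  rw [mul_comm b]
  exact mul_le_mul_of_nonneg_left (knot_le i) (φ.jump_pos i).le

lemma sum_mixtureWeight [NeZero N] : ∑ i, φ.mixtureWeight i = 1 := by
  simp only [mixtureWeight, ← Finset.sum_div]
  exact div_self φ.mixtureCoeff_pos.ne'

lemma eval_eq_mixture [NeZero N] (y : ℝ) :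
    φ.eval y = φ.mixtureCoeff * ∑ i, min (φ.knot i) y / φ.knot i * φ.mixtureWeight i +
      φ.finalSlope * y + φ.height := by
  have coeff_ne := φ.mixtureCoeff_pos.ne'
  have term : ∀ i, φ.mixtureCoeff * (min (φ.knot i) y / φ.knot i * φ.mixtureWeight i) =
      φ.jump i * y - φ.jump i * max (y - φ.knot i) 0 := fun i ↦ by
    have knot_ne := (φ.knot_pos i).ne'
    have min_eq : min (φ.knot i) y = y - max (y - φ.knot i) 0 := by
      rw [← sub_self y, max_sub_sub_left, sub_sub_cancel]
    rw [mixtureWeight, min_eq]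
    field_simp
  rw [Finset.mul_sum, Finset.sum_congr rfl fun i _ ↦ term i, Finset.sum_sub_distrib,
    ← Finset.sum_mul, eval, finalSlope, hingeSum]
  ring

end ConcaveSpline

/-! ### Chords on a uniform grid -/

/-- The slope of `u` over the `j`-th cell `[jδ, (j+1)δ]` of the grid of mesh `δ`. -/
def gridSlope (u : ℝ → ℝ) (δ : ℝ) (j : ℕ) : ℝ := (u ((j + 1 : ℕ) * δ) - u (j * δ)) / δ

/-- The line through the graph of `u` at the endpoints of the `j`-th cell. -/
def gridChord (u : ℝ → ℝ) (δ : ℝ) (j : ℕ) (y : ℝ) : ℝ := u (j * δ) + gridSlope u δ j * (y - j * δ)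

/-- The decrease of the slope of `u` across the grid point `(j+1)δ`. -/
def gridDrop (u : ℝ → ℝ) (δ : ℝ) (j : ℕ) : ℝ := gridSlope u δ j - gridSlope u δ (j + 1)

section Grid

variable {u : ℝ → ℝ} {δ : ℝ}

lemma sum_gridDrop {a b : ℕ} (hab : a ≤ b) :
    ∑ j ∈ Finset.Ico a b, gridDrop u δ j = gridSlope u δ a - gridSlope u δ b := by
  simpa only [gridDrop, sub_neg_eq_add, neg_add_eq_sub] using
    Finset.sum_Ico_sub (fun j ↦ -gridSlope u δ j) hab

lemma sum_gridDrop_mul_sub (hδ : δ ≠ 0) {a b : ℕ} (hab : a ≤ b) (y : ℝ) :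
    ∑ j ∈ Finset.Ico a b, gridDrop u δ j * (y - (j + 1 : ℕ) * δ) =
      gridChord u δ a y - gridChord u δ b y := by
  have step : ∀ j, gridDrop u δ j * (y - (j + 1 : ℕ) * δ) =
      gridChord u δ j y - gridChord u δ (j + 1) y := fun j ↦ by
    simp only [gridDrop, gridChord, gridSlope]
    push_cast
    field_simp
    ring
  rw [Finset.sum_congr rfl fun j _ ↦ step j]
  simpa only [sub_neg_eq_add, neg_add_eq_sub] using
    Finset.sum_Ico_sub (fun j ↦ -gridChord u δ j y) hab

/- To the left of `kδ` the hinges are affine, to the right of `(k+1)δ` they vanish. -/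
lemma gridChord_sub_hingeSum (hδ : 0 < δ) {a b k : ℕ} (hak : a ≤ k) (hkb : k ≤ b) {y : ℝ}
    (hy₁ : a < k → k * δ ≤ y) (hy₂ : k < b → y ≤ (k + 1 : ℕ) * δ) :
    gridChord u δ a y - hingeSum (Finset.Ico a b) (gridDrop u δ) (fun j ↦ (j + 1 : ℕ) * δ) y =
      gridChord u δ k y := by
  have past : hingeSum (Finset.Ico a k) (gridDrop u δ) (fun j ↦ (j + 1 : ℕ) * δ) y =
      gridChord u δ a y - gridChord u δ k y := by
    rw [hingeSum_eq_sum_mul_sub, sum_gridDrop_mul_sub hδ.ne' hak]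
    intro j hj
    have hjk := (Finset.mem_Ico.1 hj).2
    refine le_trans ?_ (hy₁ ((Finset.mem_Ico.1 hj).1.trans_lt hjk))
    gcongr
    exact hjk
  have future : hingeSum (Finset.Ico k b) (gridDrop u δ) (fun j ↦ (j + 1 : ℕ) * δ) y = 0 := by
    refine hingeSum_eq_zero fun j hj ↦ ?_
    refine (hy₂ ((Finset.mem_Ico.1 hj).1.trans_lt (Finset.mem_Ico.1 hj).2)).trans ?_
    gcongr
    exact (Finset.mem_Ico.1 hj).1
  rw [hingeSum, ← Finset.sum_Ico_consecutive _ hak hkb, ← hingeSum, ← hingeSum, past, future]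
  ring

end Grid

/-! ### Clustering the kinks of the chordal interpolant -/

lemma abs_sinh_add_sub_sinh_le (t : ℝ) {h : ℝ} (hh : |h| ≤ 1) :
    |sinh (t + h) - sinh t| ≤ 2 * |h| * cosh t := by
  have abs_sinh_le : |sinh t| ≤ cosh t := by
    rw [← abs_of_pos (cosh_pos t), ← sq_le_sq]
    linarith [cosh_sq t]
  have exp_abs : cosh h + |sinh h| = exp |h| := by
    rw [abs_sinh, ← cosh_abs h, cosh_add_sinh]
  calc |sinh (t + h) - sinh t| = |sinh t * (cosh h - 1) + cosh t * sinh h| := by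
        rw [sinh_add]; ring_nf
    _ ≤ |sinh t| * |cosh h - 1| + |cosh t| * |sinh h| := by
        simpa only [abs_mul] using abs_add_le (sinh t * (cosh h - 1)) (cosh t * sinh h)
    _ ≤ cosh t * (cosh h - 1) + cosh t * |sinh h| := by
        rw [abs_of_pos (cosh_pos t), abs_of_nonneg (sub_nonneg.2 (one_le_cosh h))]
        gcongr
        exact sub_nonneg.2 (one_le_cosh h)
    _ = cosh t * (exp |h| - 1) := by rw [← exp_abs]; ring
    _ ≤ cosh t * (2 * |h|) := by
        gcongr
        exact (le_abs_self _).trans (by simpa using abs_exp_sub_one_le (x := |h|) (by simpa))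
    _ = 2 * |h| * cosh t := by ring

lemma abs_sub_le_of_abs_arsinh_sub_le_one {p s : ℝ} (h : |arsinh p - arsinh s| ≤ 1) :
    |p - s| ≤ 2 * |arsinh p - arsinh s| * (1 + |s|) := by
  have cosh_le : cosh (arsinh s) ≤ 1 + |s| := by
    rw [cosh_arsinh, sqrt_le_left (by positivity)]
    nlinarith [abs_nonneg s, sq_abs s]
  calc |p - s| = |sinh (arsinh s + (arsinh p - arsinh s)) - sinh (arsinh s)| := by
        rw [add_sub_cancel, sinh_arsinh, sinh_arsinh]
    _ ≤ 2 * |arsinh p - arsinh s| * cosh (arsinh s) := abs_sinh_add_sub_sinh_le _ h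
    _ ≤ 2 * |arsinh p - arsinh s| * (1 + |s|) := by gcongr

lemma sub_le_of_arsinh_sub_arsinh_le {p q s r : ℝ} (hqs : q ≤ s) (hsp : s ≤ p) (hr : r ≤ 1)
    (h : arsinh p - arsinh q ≤ r) : p - q ≤ 2 * r * (1 + |s|) := by
  have arsinh_sp := arsinh_le_arsinh.2 hsp
  have arsinh_qs := arsinh_le_arsinh.2 hqs
  have above := abs_sub_le_of_abs_arsinh_sub_le_one (p := p) (s := s)
    (by rw [abs_of_nonneg (by linarith)]; linarith)
  have below := abs_sub_le_of_abs_arsinh_sub_le_one (p := q) (s := s)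
    (by rw [abs_of_nonpos (by linarith)]; linarith)
  rw [abs_of_nonneg (sub_nonneg.2 hsp), abs_of_nonneg (sub_nonneg.2 arsinh_sp)] at above
  rw [abs_of_nonpos (sub_nonpos.2 hqs), abs_of_nonpos (sub_nonpos.2 arsinh_qs)] at below
  calc p - q ≤ 2 * (arsinh p - arsinh q) * (1 + |s|) := by linarith
    _ ≤ 2 * r * (1 + |s|) := by gcongr

/-- An upper bound for the length of the graph of the chordal interpolant of `u` over `[aδ, bδ]`. -/
def gridLength (u : ℝ → ℝ) (δ : ℝ) (a b : ℕ) : ℝ :=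
  ∑ j ∈ Finset.Ico a b, δ * (1 + |gridSlope u δ j|)

/-- A nondecreasing function of the kink at `(j+1)δ` measuring, up to that kink, the length of the
graph and the variation of the `arsinh` of the slope; `G` is a bound for the slopes. Clusters of
kinks on which it varies little are close to affine. -/
def gridPotential (u : ℝ → ℝ) (δ G : ℝ) (a j : ℕ) : ℝ :=
  2 * arsinh G - arsinh (gridSlope u δ j) - arsinh (gridSlope u δ (j + 1)) +
    gridLength u δ a (j + 1)

section GridPotential

variable {u : ℝ → ℝ} {δ G : ℝ} {a b j k : ℕ}

lemma gridLength_add (haj : a ≤ j) (hjk : j ≤ k) :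
    gridLength u δ a j + gridLength u δ j k = gridLength u δ a k :=
  Finset.sum_Ico_consecutive _ haj hjk

lemma gridLength_nonneg (hδ : 0 ≤ δ) : 0 ≤ gridLength u δ a b :=
  Finset.sum_nonneg fun _ _ ↦ by positivity

lemma gridLength_mono (hδ : 0 ≤ δ) : Monotone (gridLength u δ a) := fun _ _ h ↦
  Finset.sum_le_sum_of_subset_of_nonneg (Finset.Ico_subset_Ico_right h) fun _ _ _ ↦ by positivity

lemma gridPotential_nonneg (hδ : 0 ≤ δ) (slope_le : ∀ j, |gridSlope u δ j| ≤ G) :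
    0 ≤ gridPotential u δ G a j := by
  have arsinh_le : ∀ j, arsinh (gridSlope u δ j) ≤ arsinh G := fun j ↦
    arsinh_le_arsinh.2 (abs_le.1 (slope_le j)).2
  unfold gridPotential
  linarith [arsinh_le j, arsinh_le (j + 1), gridLength_nonneg (u := u) (a := a) (b := j + 1) hδ]

lemma gridPotential_le (hδ : 0 ≤ δ) (slope_le : ∀ j, |gridSlope u δ j| ≤ G) (hjb : j < b) :
    gridPotential u δ G a j ≤ 4 * arsinh G + gridLength u δ a b := by
  have le_arsinh : ∀ j, -arsinh G ≤ arsinh (gridSlope u δ j) := fun j ↦ by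
    rw [← arsinh_neg]
    exact arsinh_le_arsinh.2 (abs_le.1 (slope_le j)).1
  unfold gridPotential
  linarith [le_arsinh j, le_arsinh (j + 1), gridLength_mono (u := u) (a := a) hδ hjb]

lemma gridPotential_mono (hδ : 0 ≤ δ) (slope_anti : Antitone (gridSlope u δ)) :
    Monotone (gridPotential u δ G a) := fun j k hjk ↦ by
  unfold gridPotential
  linarith [arsinh_le_arsinh.2 (slope_anti hjk), arsinh_le_arsinh.2 (slope_anti
    (Nat.succ_le_succ hjk)), gridLength_mono (u := u) (a := a) hδ (Nat.succ_le_succ hjk)]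

lemma mul_gridSlope_sub_le (hδ : 0 ≤ δ) (slope_anti : Antitone (gridSlope u δ)) {r : ℝ}
    (hr : r ≤ 1 / 2) (haj : a ≤ j) (hjk : j ≤ k)
    (potential_le : gridPotential u δ G a k ≤ gridPotential u δ G a j + r) :
    ((k : ℝ) - j) * δ * (gridSlope u δ j - gridSlope u δ (k + 1)) ≤ 4 * r ^ 2 := by
  have arsinh_anti : ∀ {j k}, j ≤ k → arsinh (gridSlope u δ k) ≤ arsinh (gridSlope u δ j) :=
    fun h ↦ arsinh_le_arsinh.2 (slope_anti h)
  obtain rfl | hjk := hjk.eq_or_lt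
  · simp only [sub_self, zero_mul]
    positivity
  have length_nonneg := gridLength_nonneg (u := u) (a := j + 1) (b := k + 1) hδ
  have length_add := gridLength_add (u := u) (δ := δ) (haj.trans j.le_succ)
    (Nat.succ_le_succ hjk.le)
  unfold gridPotential at potential_le
  have arsinh_sub_le : arsinh (gridSlope u δ j) - arsinh (gridSlope u δ (k + 1)) ≤ 2 * r := by
    linarith [arsinh_anti hjk.le, arsinh_anti (Nat.succ_le_succ hjk.le), arsinh_anti hjk]
  have length_le : gridLength u δ (j + 1) (k + 1) ≤ r := by
    linarith [arsinh_anti hjk.le, arsinh_anti (Nat.succ_le_succ hjk.le)]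
  calc ((k : ℝ) - j) * δ * (gridSlope u δ j - gridSlope u δ (k + 1))
      = ∑ _i ∈ Finset.Ico (j + 1) (k + 1), δ * (gridSlope u δ j - gridSlope u δ (k + 1)) := by
        rw [Finset.sum_const, Nat.card_Ico, nsmul_eq_mul, Nat.cast_sub (by lia)]
        push_cast
        ring
    _ ≤ ∑ i ∈ Finset.Ico (j + 1) (k + 1), 4 * r * (δ * (1 + |gridSlope u δ i|)) := by
        refine Finset.sum_le_sum fun i hi ↦ ?_
        obtain ⟨hji, hik⟩ := Finset.mem_Ico.1 hi
        have slope_sub_le := sub_le_of_arsinh_sub_arsinh_le (slope_anti hik.le)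
          (slope_anti (j.le_succ.trans hji)) (by linarith) arsinh_sub_le
        linarith [mul_le_mul_of_nonneg_left slope_sub_le hδ]
    _ = 4 * r * gridLength u δ (j + 1) (k + 1) := by rw [← Finset.mul_sum, gridLength]
    _ ≤ 4 * r * r := by
        gcongr
        linarith
    _ = 4 * r ^ 2 := by ring

end GridPotential

/-- The spline `φ` agrees with the chordal interpolant of `u` on the grid of mesh `δ` up to the
cell `a` and from the cell `b` on (where both are extended to lines), and exceeds it by at most `ε`
in between. Its kinks are `δ`-separated. -/
structure ConcaveSpline.IsGridApprox {N : ℕ} (φ : ConcaveSpline N) (u : ℝ → ℝ) (δ ε : ℝ)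
    (a b : ℕ) : Prop where
  knot_le : ∀ i, φ.knot i ≤ b * δ
  knot_separated : ∀ i j, i < j → φ.knot i + δ ≤ φ.knot j
  slope_eq : φ.slope = gridSlope u δ a
  finalSlope_eq : φ.finalSlope = gridSlope u δ b
  eval_left : ∀ y ≤ (a + 1 : ℕ) * δ, φ.eval y = gridChord u δ a y
  eval_right : ∀ y, b * δ ≤ y → φ.eval y = gridChord u δ b y
  eval_mem : ∀ k ∈ Icc a b, ∀ y ∈ Icc (k * δ) ((k + 1 : ℕ) * δ),
    φ.eval y ∈ Icc (gridChord u δ k y) (gridChord u δ k y + ε)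

section GridCluster

variable {u : ℝ → ℝ} {δ G m : ℝ} {a b : ℕ}

/-- The grid points between the cells `a` and `b` at which the chordal interpolant has a kink. -/
def gridKinks (u : ℝ → ℝ) (δ : ℝ) (a b : ℕ) : Finset ℕ :=
  {j ∈ Finset.Ico a b | 0 < gridDrop u δ j}

lemma sum_gridKinks (slope_anti : Antitone (gridSlope u δ)) (g : ℕ → ℝ) :
    ∑ j ∈ gridKinks u δ a b, gridDrop u δ j * g j =
      ∑ j ∈ Finset.Ico a b, gridDrop u δ j * g j := by
  refine Finset.sum_filter_of_ne fun j _ h ↦ ?_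
  exact (sub_nonneg.2 (slope_anti j.le_succ)).lt_of_ne' (left_ne_zero_of_mul h)

lemma sum_gridDrop_le_of_subset (slope_anti : Antitone (gridSlope u δ)) {s : Finset ℕ} (hab : a ≤ b)
    (hs : s ⊆ Finset.Ico a b) : ∑ j ∈ s, gridDrop u δ j ≤ gridSlope u δ a - gridSlope u δ b := by
  rw [← sum_gridDrop hab]
  exact Finset.sum_le_sum_of_subset_of_nonneg hs fun j _ _ ↦ sub_nonneg.2 (slope_anti j.le_succ)

/-- The label of the cluster containing the kink at `(j+1)δ`: the potential is cut into intervals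
of length `1/m`. -/
def gridLabel (u : ℝ → ℝ) (δ G : ℝ) (a : ℕ) (m : ℝ) (j : ℕ) : ℕ := ⌊m * gridPotential u δ G a j⌋₊

lemma gridLabel_mono (hδ : 0 ≤ δ) (slope_anti : Antitone (gridSlope u δ)) (hm : 0 ≤ m) :
    Monotone (gridLabel u δ G a m) := fun _ _ h ↦
  Nat.floor_mono (mul_le_mul_of_nonneg_left (gridPotential_mono hδ slope_anti h) hm)

lemma gridPotential_le_of_gridLabel_eq (hδ : 0 ≤ δ) (slope_le : ∀ j, |gridSlope u δ j| ≤ G)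
    (hm : 0 < m) {j k : ℕ} (label_eq : gridLabel u δ G a m j = gridLabel u δ G a m k) :
    gridPotential u δ G a k ≤ gridPotential u δ G a j + 1 / m := by
  have lt_label := Nat.lt_floor_add_one (m * gridPotential u δ G a k)
  have label_le := Nat.floor_le
    (mul_nonneg hm.le (gridPotential_nonneg (a := a) (j := j) hδ slope_le))
  rw [show ⌊m * gridPotential u δ G a k⌋₊ = _ from label_eq.symm, gridLabel] at lt_label
  rw [← sub_le_iff_le_add', le_div_iff₀ hm]
  linarith

lemma exists_Icc_mul_clusterMass_le (hδ : 0 ≤ δ) (slope_anti : Antitone (gridSlope u δ))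
    (slope_le : ∀ j, |gridSlope u δ j| ≤ G) (hm : 2 ≤ m) {k : ℕ}
    (hk : k ∈ (gridKinks u δ a b).image (gridLabel u δ G a m)) :
    ∃ p q : ℝ, (∀ j ∈ gridKinks u δ a b, gridLabel u δ G a m j = k →
        ((j + 1 : ℕ) * δ : ℝ) ∈ Icc p q) ∧
      (q - p) * clusterMass (gridKinks u δ a b) (gridDrop u δ) (gridLabel u δ G a m) k ≤
        4 / m ^ 2 := by
  set cluster := {j ∈ gridKinks u δ a b | gridLabel u δ G a m j = k}
  have cluster_nonempty : cluster.Nonempty := by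
    obtain ⟨j, hj, hjk⟩ := Finset.mem_image.1 hk
    exact ⟨j, Finset.mem_filter.2 ⟨hj, hjk⟩⟩
  set first := cluster.min' cluster_nonempty
  set last := cluster.max' cluster_nonempty
  obtain ⟨first_mem, first_label⟩ := Finset.mem_filter.1 (cluster.min'_mem cluster_nonempty)
  obtain ⟨-, last_label⟩ := Finset.mem_filter.1 (cluster.max'_mem cluster_nonempty)
  have first_le_last : first ≤ last := cluster.min'_le_max' cluster_nonempty
  have le_first : a ≤ first := (Finset.mem_Ico.1 (Finset.mem_filter.1 first_mem).1).1
  have mass_le : ∑ j ∈ cluster, gridDrop u δ j ≤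
      gridSlope u δ first - gridSlope u δ (last + 1) :=
    sum_gridDrop_le_of_subset slope_anti (first_le_last.trans last.le_succ) fun j hj ↦
      Finset.mem_Ico.2 ⟨cluster.min'_le j hj, Nat.lt_succ_of_le (cluster.le_max' j hj)⟩
  have potential_le := gridPotential_le_of_gridLabel_eq hδ slope_le (by linarith)
    (first_label.trans last_label.symm)
  refine ⟨(first + 1 : ℕ) * δ, (last + 1 : ℕ) * δ, fun j hj hjk ↦ ?_, ?_⟩
  · have j_mem : j ∈ cluster := Finset.mem_filter.2 ⟨hj, hjk⟩
    have first_le := cluster.min'_le j j_mem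
    have le_last := cluster.le_max' j j_mem
    constructor <;> gcongr
  · calc _ ≤ ((last : ℝ) - first) * δ * (gridSlope u δ first - gridSlope u δ (last + 1)) := by
          push_cast
          rw [← sub_mul, add_sub_add_right_eq_sub]
          have diam_nonneg : (0 : ℝ) ≤ last - first := sub_nonneg.2 (Nat.cast_le.2 first_le_last)
          exact mul_le_mul_of_nonneg_left mass_le (mul_nonneg diam_nonneg hδ)
      _ ≤ 4 * (1 / m) ^ 2 := mul_gridSlope_sub_le hδ slope_anti
          (one_div_le_one_div_of_le two_pos hm) le_first first_le_last potential_le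
      _ = 4 / m ^ 2 := by ring

lemma card_image_gridLabel_le (hδ : 0 ≤ δ) (slope_le : ∀ j, |gridSlope u δ j| ≤ G) (hm : 0 ≤ m) :
    (((gridKinks u δ a b).image (gridLabel u δ G a m)).card : ℝ) ≤
      m * (4 * arsinh G + gridLength u δ a b) + 1 := by
  have G_nonneg : 0 ≤ G := (abs_nonneg _).trans (slope_le 0)
  have bound_nonneg : 0 ≤ m * (4 * arsinh G + gridLength u δ a b) :=
    mul_nonneg hm (add_nonneg (mul_nonneg zero_le_four (arsinh_nonneg_iff.2 G_nonneg))
      (gridLength_nonneg hδ))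
  have subset_range : (gridKinks u δ a b).image (gridLabel u δ G a m) ⊆
      Finset.range (⌊m * (4 * arsinh G + gridLength u δ a b)⌋₊ + 1) := by
    refine Finset.image_subset_iff.2 fun j hj ↦ Finset.mem_range_succ_iff.2 (Nat.floor_mono ?_)
    have hjb := (Finset.mem_Ico.1 (Finset.mem_filter.1 hj).1).2
    exact mul_le_mul_of_nonneg_left (gridPotential_le hδ slope_le hjb) hm
  calc _ ≤ ((⌊m * (4 * arsinh G + gridLength u δ a b)⌋₊ + 1 : ℕ) : ℝ) := by
        exact_mod_cast (Finset.card_le_card subset_range).trans_eq (Finset.card_range _)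
    _ ≤ _ := by
        push_cast
        gcongr
        exact Nat.floor_le bound_nonneg

lemma exists_fin_hingeSum_gridDrop_approx (hδ : 0 < δ) (slope_anti : Antitone (gridSlope u δ))
    (slope_le : ∀ j, |gridSlope u δ j| ≤ G) (hm : 2 ≤ m) (hab : a ≤ b) :
    ∃ (N : ℕ) (D Z : Fin N → ℝ), N ≤ m * (4 * arsinh G + gridLength u δ a b) + 1 ∧
      (∀ i, 0 < D i) ∧ (∀ i j, i < j → Z i + δ ≤ Z j) ∧
      (∀ i, Z i ∈ Icc ((a + 1 : ℕ) * δ) (b * δ)) ∧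
      ∑ i, D i = gridSlope u δ a - gridSlope u δ b ∧
      ∑ i, D i * Z i = ∑ j ∈ Finset.Ico a b, gridDrop u δ j * ((j + 1 : ℕ) * δ) ∧
      ∀ y, hingeSum (Finset.Ico a b) (gridDrop u δ) (fun j ↦ (j + 1 : ℕ) * δ) y -
        hingeSum Finset.univ D Z y ∈ Icc 0 (4 / m ^ 2) := by
  have separated : ∀ i ∈ gridKinks u δ a b, ∀ j ∈ gridKinks u δ a b,
      gridLabel u δ G a m i < gridLabel u δ G a m j →
        ((i + 1 : ℕ) * δ : ℝ) + δ ≤ (j + 1 : ℕ) * δ := fun i _ j _ label_lt ↦ by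
    have hij : i + 1 ≤ j := (gridLabel_mono hδ.le slope_anti (by linarith)).reflect_lt label_lt
    calc ((i + 1 : ℕ) * δ : ℝ) + δ = (i + 1 + 1 : ℕ) * δ := by push_cast; ring
      _ ≤ (j + 1 : ℕ) * δ := by gcongr
  obtain ⟨D, Z, D_pos, Z_separated, Z_mem, sum_D, sum_DZ, approx⟩ :=
    exists_fin_hingeSum_approx (I := gridKinks u δ a b) (fun j hj ↦ (Finset.mem_filter.1 hj).2)
      hδ.le (by positivity : 0 ≤ 4 / m ^ 2) separated
      (fun k hk ↦ exists_Icc_mul_clusterMass_le hδ.le slope_anti slope_le hm hk)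
  refine ⟨_, D, Z, card_image_gridLabel_le hδ.le slope_le (by linarith), D_pos, Z_separated,
    Z_mem _ (convex_Icc _ _) fun j hj ↦ ?_, ?_, sum_DZ.trans (sum_gridKinks slope_anti _),
    fun y ↦ ?_⟩
  · obtain ⟨haj, hjb⟩ := Finset.mem_Ico.1 (Finset.mem_filter.1 hj).1
    constructor <;> gcongr
    exact hjb
  · have sum_drop := sum_gridKinks (a := a) (b := b) slope_anti fun _ ↦ 1
    simp only [mul_one] at sum_drop
    rw [sum_D, sum_drop, sum_gridDrop hab]
  · rw [hingeSum, ← sum_gridKinks slope_anti]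
    exact approx y

theorem exists_isGridApprox (hδ : 0 < δ) (slope_anti : Antitone (gridSlope u δ))
    (slope_le : ∀ j, |gridSlope u δ j| ≤ G) (hm : 2 ≤ m) (hab : a ≤ b) :
    ∃ (N : ℕ) (φ : ConcaveSpline N), N ≤ m * (4 * arsinh G + gridLength u δ a b) + 1 ∧
      φ.IsGridApprox u δ (4 / m ^ 2) a b := by
  obtain ⟨N, D, Z, card_le, D_pos, Z_separated, Z_mem, sum_D, sum_DZ, approx⟩ :=
    exists_fin_hingeSum_gridDrop_approx hδ slope_anti slope_le hm hab
  let φ : ConcaveSpline N :=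
    { knot := Z, jump := D, height := gridChord u δ a 0, slope := gridSlope u δ a
      knot_pos := fun i ↦ lt_of_lt_of_le (by positivity) (Z_mem i).1
      jump_pos := D_pos }
  have eval_eq : ∀ y, φ.eval y = gridChord u δ a y - hingeSum Finset.univ D Z y := fun y ↦ by
    simp only [ConcaveSpline.eval, gridChord, φ]
    ring
  refine ⟨N, φ, card_le,
    { knot_le := fun i ↦ (Z_mem i).2
      knot_separated := Z_separated
      slope_eq := rfl
      finalSlope_eq := by simp only [ConcaveSpline.finalSlope, φ, sum_D, sub_sub_cancel]
      eval_left := fun y hy ↦ by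
        rw [eval_eq, hingeSum_eq_zero fun i _ ↦ hy.trans (Z_mem i).1, sub_zero]
      eval_right := fun y hy ↦ ?_
      eval_mem := fun k hk y hy ↦ ?_ }⟩
  · rw [eval_eq, hingeSum_eq_sum_mul_sub fun i _ ↦ (Z_mem i).2.trans hy, sum_mul_sub_eq, sum_D,
      sum_DZ, ← sum_gridDrop hab, ← sum_mul_sub_eq, sum_gridDrop_mul_sub hδ.ne' hab,
      sub_sub_cancel]
  · have chord_eq := gridChord_sub_hingeSum (u := u) hδ hk.1 hk.2 (fun _ ↦ hy.1) fun _ ↦ hy.2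
    obtain ⟨lower, upper⟩ := approx y
    rw [eval_eq, ← chord_eq]
    constructor <;> linarith

end GridCluster

/-! ### Approximating a concave function by a spline -/

lemma sum_abs_sub_le_of_antitone {U : ℕ → ℝ} (hU : Antitone fun i ↦ U (i + 1) - U i) {W : ℝ}
    (U_le : ∀ i, U i ≤ W) {a b : ℕ} (hab : a ≤ b) :
    ∑ i ∈ Finset.Ico a b, |U (i + 1) - U i| ≤ 2 * W - U a - U b := by
  suffices h : ∑ i ∈ Finset.Ico a b, |U (i + 1) - U i| ≤ 2 * W - U a - U b ∧
      (U b ≤ U (b + 1) → ∑ i ∈ Finset.Ico a b, |U (i + 1) - U i| = U b - U a) from h.1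
  induction b, hab using Nat.le_induction with
  | base => exact ⟨by simp; linarith [U_le a], by simp⟩
  | succ b hab ih =>
    rw [Finset.sum_Ico_succ_top hab]
    obtain h | h := le_total (U b) (U (b + 1))
    · rw [abs_of_nonneg (sub_nonneg.2 h), ih.2 h]
      exact ⟨by linarith [U_le (b + 1)], fun _ ↦ by ring⟩
    · have increment_le : U (b + 2) - U (b + 1) ≤ U (b + 1) - U b := hU (Nat.le_succ b)
      rw [abs_of_nonpos (sub_nonpos.2 h)]
      exact ⟨by linarith [ih.1], fun h' ↦ by linarith [ih.2 (by linarith)]⟩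

lemma exists_mem_Icc_of_lt_of_le {U : ℕ → ℝ} {r c : ℝ} (step : ∀ j, U (j + 1) ≤ U j + r) {a b : ℕ}
    (hab : a ≤ b) (ha : U a < c) (hb : c ≤ U b) : ∃ j ≤ b, U j ∈ Icc c (c + r) := by
  induction b, hab using Nat.le_induction with
  | base => exact absurd hb ha.not_ge
  | succ b _ ih =>
    obtain hbc | hbc := le_or_gt c (U b)
    · obtain ⟨j, hj, hU⟩ := ih hbc
      exact ⟨j, hj.trans b.le_succ, hU⟩
    · exact ⟨b + 1, le_rfl, hb, by linarith [step b]⟩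

lemma exists_mem_Icc_of_le_of_lt {U : ℕ → ℝ} {r c : ℝ} (step : ∀ j, U j ≤ U (j + 1) + r) {a b : ℕ}
    (hab : a ≤ b) (ha : c ≤ U a) (hb : U b < c) : ∃ j ≥ a, U j ∈ Icc c (c + r) := by
  induction b, hab using Nat.le_induction with
  | base => exact absurd ha hb.not_ge
  | succ b hab ih =>
    obtain hbc | hbc := le_or_gt c (U b)
    · exact ⟨b, hab, hbc, by linarith [step b]⟩
    · exact ih hbc

lemma exists_nat_mul_le_lt {δ y : ℝ} (hδ : 0 < δ) (hy : 0 ≤ y) :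
    ∃ k : ℕ, k * δ ≤ y ∧ y < (k + 1 : ℕ) * δ := by
  refine ⟨⌊y / δ⌋₊, ?_, ?_⟩
  · exact (le_div_iff₀ hδ).1 (Nat.floor_le (div_nonneg hy hδ.le))
  · exact_mod_cast (div_lt_iff₀ hδ).1 (Nat.lt_floor_add_one (y / δ))

lemma sub_mul_add_sub_mul_le_of_concaveOn {u : ℝ → ℝ} {s : Set ℝ} (hu : ConcaveOn ℝ s u)
    {x y z : ℝ} (hx : x ∈ s) (hz : z ∈ s) (hxy : x ≤ y) (hyz : y ≤ z) :
    (z - y) * u x + (y - x) * u z ≤ (z - x) * u y := by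
  obtain rfl | hxy := hxy.eq_or_lt
  · simp
  obtain rfl | hyz := hyz.eq_or_lt
  · simp
  have slope_anti := hu.slope_anti_adjacent hx hz hxy hyz
  rw [div_le_div_iff₀ (sub_pos.2 hyz) (sub_pos.2 hxy)] at slope_anti
  linarith

section Chord

variable {u : ℝ → ℝ} {δ G : ℝ} {k : ℕ} {y : ℝ}

lemma gridSlope_mul (hδ : δ ≠ 0) : gridSlope u δ k * δ = u ((k + 1 : ℕ) * δ) - u (k * δ) :=
  div_mul_cancel₀ _ hδ

lemma antitone_gridSlope (hu : ConcaveOn ℝ univ u) (hδ : 0 < δ) : Antitone (gridSlope u δ) := by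
  refine antitone_nat_of_succ_le fun k ↦ ?_
  have three_point := sub_mul_add_sub_mul_le_of_concaveOn hu (mem_univ (k * δ))
    (mem_univ ((k + 1 + 1 : ℕ) * δ)) (y := (k + 1 : ℕ) * δ) (by gcongr; simp) (by gcongr; simp)
  rw [gridSlope, gridSlope, div_le_div_iff_of_pos_right hδ]
  push_cast at three_point ⊢
  nlinarith

lemma gridChord_le (hu : ConcaveOn ℝ univ u) (hδ : 0 < δ)
    (hy : y ∈ Icc (k * δ) ((k + 1 : ℕ) * δ)) : gridChord u δ k y ≤ u y := by
  have three_point := sub_mul_add_sub_mul_le_of_concaveOn hu (mem_univ (k * δ))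
    (mem_univ ((k + 1 : ℕ) * δ)) hy.1 hy.2
  have slope_mul := gridSlope_mul (u := u) (k := k) hδ.ne'
  refine le_of_mul_le_mul_right ?_ hδ
  rw [gridChord]
  push_cast at three_point slope_mul
  linear_combination three_point + (y - k * δ) * slope_mul

lemma le_gridChord (hu : ConcaveOn ℝ univ u) (hδ : 0 < δ)
    (hy : y ≤ k * δ ∨ (k + 1 : ℕ) * δ ≤ y) : u y ≤ gridChord u δ k y := by
  have slope_mul := gridSlope_mul (u := u) (k := k) hδ.ne'
  have cell_le : (k * δ : ℝ) ≤ (k + 1 : ℕ) * δ := by gcongr; simp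
  refine le_of_mul_le_mul_right ?_ hδ
  rw [gridChord]
  obtain hy | hy := hy
  · have three_point := sub_mul_add_sub_mul_le_of_concaveOn hu (mem_univ y)
      (mem_univ ((k + 1 : ℕ) * δ)) hy cell_le
    push_cast at three_point slope_mul
    linear_combination three_point + (k * δ - y) * slope_mul
  · have three_point := sub_mul_add_sub_mul_le_of_concaveOn hu (mem_univ (k * δ))
      (mem_univ y) cell_le hy
    push_cast at three_point slope_mul
    linear_combination three_point - (y - k * δ) * slope_mul

lemma abs_sub_grid_le (lip : ∀ x y, u x - u y ≤ G * |x - y|) (hδ : 0 ≤ δ) (k : ℕ) :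
    |u ((k + 1 : ℕ) * δ) - u (k * δ)| ≤ G * δ := by
  have abs_cell : |((k + 1 : ℕ) * δ - k * δ : ℝ)| = δ := by
    rw [← sub_mul, Nat.cast_succ, add_sub_cancel_left, one_mul, abs_of_nonneg hδ]
  refine abs_le'.2 ⟨(lip _ _).trans_eq (by rw [abs_cell]), ?_⟩
  rw [neg_sub]
  exact (lip _ _).trans_eq (by rw [abs_sub_comm, abs_cell])

lemma abs_gridSlope_le (lip : ∀ x y, u x - u y ≤ G * |x - y|) (hδ : 0 < δ) (k : ℕ) :
    |gridSlope u δ k| ≤ G := by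
  rw [gridSlope, abs_div, abs_of_pos hδ, div_le_iff₀ hδ]
  exact abs_sub_grid_le lip hδ.le k

lemma sub_le_gridChord (lip : ∀ x y, u x - u y ≤ G * |x - y|) (hδ : 0 < δ)
    (hy : y ∈ Icc (k * δ) ((k + 1 : ℕ) * δ)) : u y - 2 * (G * δ) ≤ gridChord u δ k y := by
  have slope_le := abs_gridSlope_le lip hδ k
  have dist_nonneg : 0 ≤ y - k * δ := sub_nonneg.2 hy.1
  have dist_le : y - k * δ ≤ δ := by
    have := hy.2
    push_cast at this
    linarith
  have from_left : u y - u (k * δ) ≤ G * (y - k * δ) := by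
    simpa only [abs_of_nonneg dist_nonneg] using lip y (k * δ)
  have slope_mul_le : -G * (y - k * δ) ≤ gridSlope u δ k * (y - k * δ) :=
    mul_le_mul_of_nonneg_right (neg_le_of_abs_le slope_le) dist_nonneg
  have G_mul_le := mul_le_mul_of_nonneg_left dist_le ((abs_nonneg _).trans slope_le)
  rw [gridChord]
  linarith

lemma gridLength_le (hu : ConcaveOn ℝ univ u) (hδ : 0 < δ) {β : ℝ} (u_le : ∀ x, u x ≤ β) {a b : ℕ}
    (hab : a ≤ b) :
    gridLength u δ a b ≤ b * δ - a * δ + 2 * β - u (a * δ) - u (b * δ) := by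
  have increments_anti : Antitone fun j : ℕ ↦ u ((j + 1 : ℕ) * δ) - u (j * δ) := fun i j hij ↦ by
    simp only [← gridSlope_mul hδ.ne']
    exact mul_le_mul_of_nonneg_right (antitone_gridSlope hu hδ hij) hδ.le
  have variation_le := sum_abs_sub_le_of_antitone increments_anti (fun j ↦ u_le (j * δ)) hab
  have term : ∀ j : ℕ, δ * (1 + |gridSlope u δ j|) = δ + |u ((j + 1 : ℕ) * δ) - u (j * δ)| :=
    fun j ↦ by rw [← gridSlope_mul hδ.ne', abs_mul, abs_of_pos hδ]; ring
  simp only [gridLength, term, Finset.sum_add_distrib, Finset.sum_const, Nat.card_Ico,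
    nsmul_eq_mul, Nat.cast_sub hab]
  linarith

end Chord

namespace ConcaveSpline.IsGridApprox

variable {N : ℕ} {φ : ConcaveSpline N} {u : ℝ → ℝ} {δ ε G : ℝ} {a b : ℕ} {y : ℝ}

lemma eval_of_le (hφ : φ.IsGridApprox u δ ε a b) (hδ : 0 ≤ δ) (hy : y ≤ a * δ) :
    φ.eval y = u (a * δ) - φ.slope * |y - a * δ| := by
  rw [hφ.eval_left y (hy.trans (by gcongr; simp)), gridChord, hφ.slope_eq,
    abs_of_nonpos (sub_nonpos.2 hy)]
  ring

lemma eval_of_ge (hφ : φ.IsGridApprox u δ ε a b) (hδ : 0 < δ) (hy : (b + 1 : ℕ) * δ ≤ y) :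
    φ.eval y = u ((b + 1 : ℕ) * δ) - -φ.finalSlope * |y - (b + 1 : ℕ) * δ| := by
  have slope_mul := gridSlope_mul (u := u) (k := b) hδ.ne'
  rw [hφ.eval_right y (hy.trans' (by gcongr; simp)), gridChord, hφ.finalSlope_eq,
    abs_of_nonneg (sub_nonneg.2 hy)]
  push_cast at slope_mul ⊢
  linear_combination slope_mul

lemma exists_cell (hδ : 0 < δ) (hy : y ∈ Ico (a * δ) ((b + 1 : ℕ) * δ)) :
    ∃ k ∈ Icc a b, y ∈ Icc (k * δ) ((k + 1 : ℕ) * δ) := by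
  obtain ⟨k, hky, hyk⟩ := exists_nat_mul_le_lt hδ (hy.1.trans' (by positivity))
  have hak : a < k + 1 := Nat.cast_lt.1 (lt_of_mul_lt_mul_right (hy.1.trans_lt hyk) hδ.le)
  have hkb : k < b + 1 := Nat.cast_lt.1 (lt_of_mul_lt_mul_right (hky.trans_lt hy.2) hδ.le)
  exact ⟨k, ⟨Nat.le_of_lt_succ hak, Nat.le_of_lt_succ hkb⟩, hky, hyk.le⟩

lemma sub_le_eval (hφ : φ.IsGridApprox u δ ε a b) (hu : ConcaveOn ℝ univ u)
    (lip : ∀ x y, u x - u y ≤ G * |x - y|) (hδ : 0 < δ) (y : ℝ) :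
    u y - 2 * (G * δ) ≤ φ.eval y := by
  have Gδ_nonneg : 0 ≤ G * δ := (abs_nonneg _).trans (abs_sub_grid_le lip hδ.le 0)
  obtain hya | hay := lt_or_ge y (a * δ)
  · rw [hφ.eval_left y (hya.le.trans (by gcongr; simp))]
    linarith [le_gridChord hu hδ (.inl hya.le)]
  obtain hyb | hby := lt_or_ge y ((b + 1 : ℕ) * δ)
  · obtain ⟨k, hk, hyk⟩ := exists_cell hδ ⟨hay, hyb⟩
    exact (sub_le_gridChord lip hδ hyk).trans (hφ.eval_mem k hk y hyk).1
  · rw [hφ.eval_right y (hby.trans' (by gcongr; simp))]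
    linarith [le_gridChord hu hδ (.inr hby)]

lemma eval_le (hφ : φ.IsGridApprox u δ ε a b) (hu : ConcaveOn ℝ univ u) (hδ : 0 < δ)
    (hy : y ∈ Ico (a * δ) ((b + 1 : ℕ) * δ)) : φ.eval y ≤ u y + ε := by
  obtain ⟨k, hk, hyk⟩ := exists_cell hδ hy
  linarith [(hφ.eval_mem k hk y hyk).2, gridChord_le hu hδ hyk]

end ConcaveSpline.IsGridApprox

/-- The spline `φ` is within `η` below and `ε` above `u` except on two outer intervals, where it is
at most `l` and decays at rate at least `c` away from `a` and `b` respectively. Its extreme slopes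
lie between `c` and `G` in absolute value and its kinks are `δ`-separated. -/
structure ConcaveSpline.IsTailApprox {N : ℕ} (φ : ConcaveSpline N) (u : ℝ → ℝ)
    (δ c G η ε l a b : ℝ) : Prop where
  knot_separated : ∀ i j, i < j → φ.knot i + δ ≤ φ.knot j
  slope_mem : φ.slope ∈ Icc c G
  neg_finalSlope_mem : -φ.finalSlope ∈ Icc c G
  sub_le_eval : ∀ y, u y - η ≤ φ.eval y
  eval_le : ∀ y, φ.eval y ≤ u y + ε ∨ φ.eval y ≤ l - c * |y - a| ∨ φ.eval y ≤ l - c * |y - b|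

section TailApprox

variable {u : ℝ → ℝ} {δ G c l h H x₀ p q : ℝ}

lemma ConcaveSpline.IsGridApprox.isTailApprox {N : ℕ} {φ : ConcaveSpline N} {ε : ℝ} {a b : ℕ}
    (hφ : φ.IsGridApprox u δ ε a b) (hu : ConcaveOn ℝ univ u)
    (lip : ∀ x y, u x - u y ≤ G * |x - y|) (hδ : 0 < δ) (le_slope : c ≤ gridSlope u δ a)
    (le_neg_slope : c ≤ -gridSlope u δ b) (left_le : u (a * δ) ≤ l)
    (right_le : u ((b + 1 : ℕ) * δ) ≤ l) :
    φ.IsTailApprox u δ c G (2 * (G * δ)) ε l (a * δ) ((b + 1 : ℕ) * δ) := by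
  have slope_le := fun k ↦ abs_le.1 (abs_gridSlope_le lip hδ k)
  refine ⟨hφ.knot_separated, ?_, ?_, hφ.sub_le_eval hu lip hδ, fun y ↦ ?_⟩
  · rw [hφ.slope_eq]
    exact ⟨le_slope, (slope_le a).2⟩
  · rw [hφ.finalSlope_eq]
    exact ⟨le_neg_slope, neg_le.1 (slope_le b).1⟩
  obtain hya | hay := lt_or_ge y (a * δ)
  · rw [← hφ.slope_eq] at le_slope
    rw [hφ.eval_of_le hδ.le hya.le]
    exact .inr (.inl (by gcongr))
  obtain hyb | hby := lt_or_ge y ((b + 1 : ℕ) * δ)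
  · exact .inl (hφ.eval_le hu hδ ⟨hay, hyb⟩)
  · rw [← hφ.finalSlope_eq] at le_neg_slope
    rw [hφ.eval_of_ge hδ hby]
    exact .inr (.inr (by gcongr))

lemma exists_grid_sublevel (hδ : 0 < δ) {q : ℝ} (level_le : ∀ x, -H ≤ u x → x ≤ q) (k : ℕ) :
    ∃ j ≥ k, u (j * δ) < -H := by
  obtain ⟨j, hj⟩ := exists_nat_gt (q / δ)
  refine ⟨max k j, le_max_left _ _, lt_of_not_ge fun hH ↦ ?_⟩
  have hjq := (div_lt_iff₀ hδ).1 hj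
  have hjk : (j * δ : ℝ) ≤ (max k j : ℕ) * δ := by gcongr; exact le_max_right _ _
  linarith [level_le _ hH]

/- The cells `a` and `b` straddle the level `-H` on either side of the cell `k` of `x₀`. -/
lemma exists_grid_level (lip : ∀ x y, u x - u y ≤ G * |x - y|) (hδ : 0 < δ) (hGδ : G * δ ≤ 1)
    (level_le : ∀ x, -H ≤ u x → x ≤ q) (u_zero : u 0 < -H) (hx₀ : 0 ≤ x₀) (le_u : -h ≤ u x₀)
    (hhH : h + 2 < H) :
    ∃ a k b : ℕ, a < k ∧ k ≤ b ∧ -h - 1 ≤ u (k * δ) ∧ u (a * δ) ∈ Icc (-H) (1 - H) ∧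
      u ((b + 1 : ℕ) * δ) ∈ Icc (-H) (1 - H) := by
  have step := fun j ↦ abs_le.1 ((abs_sub_grid_le lip hδ.le j).trans hGδ)
  obtain ⟨k, hkx, hxk⟩ := exists_nat_mul_le_lt hδ hx₀
  have le_u_k : -h - 1 ≤ u (k * δ) := by
    have G_nonneg : 0 ≤ G := (abs_nonneg _).trans (abs_gridSlope_le lip hδ 0)
    have dist_le : |x₀ - k * δ| ≤ δ := by
      rw [abs_of_nonneg (sub_nonneg.2 hkx)]
      push_cast at hxk
      linarith
    linarith [lip x₀ (k * δ), mul_le_mul_of_nonneg_left dist_le G_nonneg]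
  obtain ⟨a, hak, ha⟩ := exists_mem_Icc_of_lt_of_le (U := fun j : ℕ ↦ u (j * δ)) (c := -H)
    (r := 1) (fun j ↦ by linarith [(step j).2]) k.zero_le (by simpa using u_zero) (by linarith)
  obtain ⟨j, hkj, hj⟩ := exists_grid_sublevel hδ level_le k
  obtain ⟨b, hkb, hb⟩ := exists_mem_Icc_of_le_of_lt (U := fun j : ℕ ↦ u (j * δ)) (c := -H)
    (r := 1) (fun j ↦ by linarith [(step j).1]) hkj (by linarith) hj
  simp only [neg_add_eq_sub] at ha hb
  have hak' : a ≠ k := by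
    rintro rfl
    linarith [ha.2]
  have hkb' : k ≠ b := by
    rintro rfl
    linarith [hb.2]
  obtain ⟨b, rfl⟩ : ∃ b', b = b' + 1 := Nat.exists_eq_succ_of_ne_zero (by lia)
  exact ⟨a, k, b, by lia, by lia, le_u_k, ha, hb⟩

theorem exists_isTailApprox (hu : ConcaveOn ℝ univ u) (lip : ∀ x y, u x - u y ≤ G * |x - y|)
    (hδ : 0 < δ) (hGδ : G * δ ≤ 1) {m : ℝ} (hm : 2 ≤ m) {β : ℝ} (u_le : ∀ x, u x ≤ β)
    (level_subset : ∀ x, -H ≤ u x → x ∈ Icc p q) (u_zero : u 0 < -H) (hx₀ : 0 ≤ x₀)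
    (le_u : -h ≤ u x₀) (hhH : h + 2 < H) (hc : 0 ≤ c) (hcH : c * (q - p) ≤ H - h - 2) :
    ∃ (N : ℕ) (φ : ConcaveSpline N) (a b : ℝ),
      N ≤ m * (4 * arsinh G + (q - p + 2 * β + 2 * H)) + 1 ∧ (∀ i, φ.knot i ≤ q) ∧
      φ.IsTailApprox u δ c G (2 * (G * δ)) (4 / m ^ 2) (1 - H) a b := by
  obtain ⟨a, k, b, hak, hkb, le_u_k, ha, hb⟩ :=
    exists_grid_level lip hδ hGδ (fun x hx ↦ (level_subset x hx).2) u_zero hx₀ le_u hhH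
  obtain ⟨p_le_a, -⟩ := level_subset _ ha.1
  obtain ⟨-, b_le_q⟩ := level_subset _ hb.1
  obtain ⟨p_le_k, k_le_q⟩ := level_subset (k * δ) (by linarith)
  have hak' : ((a + 1 : ℕ) * δ : ℝ) ≤ k * δ := by gcongr; exact hak
  have hkb' : (k * δ : ℝ) ≤ b * δ := by gcongr
  have le_slope : c ≤ gridSlope u δ a := by
    have chord := le_gridChord hu hδ (.inr hak')
    rw [gridChord] at chord
    push_cast at hak'
    refine le_of_mul_le_mul_right (a := (k : ℝ) * δ - a * δ) ?_ (by linarith)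
    linarith [mul_le_mul_of_nonneg_left (by linarith : k * δ - a * δ ≤ q - p) hc, ha.2]
  have le_neg_slope : c ≤ -gridSlope u δ b := by
    have chord := le_gridChord hu hδ (.inl hkb')
    have slope_mul := gridSlope_mul (u := u) (k := b) hδ.ne'
    rw [gridChord] at chord
    push_cast at b_le_q
    refine le_of_mul_le_mul_right (a := (b : ℝ) * δ + δ - k * δ) ?_ (by linarith)
    linarith [mul_le_mul_of_nonneg_left (by linarith : b * δ + δ - k * δ ≤ q - p) hc, hb.2]
  obtain ⟨N, φ, card_le, hφ⟩ := exists_isGridApprox hδ (antitone_gridSlope hu hδ)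
    (abs_gridSlope_le lip hδ) hm (hak.le.trans hkb)
  refine ⟨N, φ, a * δ, (b + 1 : ℕ) * δ, card_le.trans ?_, fun i ↦ (hφ.knot_le i).trans
    (b_le_q.trans' (by gcongr; simp)), hφ.isTailApprox hu lip hδ le_slope le_neg_slope ha.2 hb.2⟩
  have length_mono := gridLength_mono (u := u) (a := a) hδ.le b.le_succ
  have length_le := gridLength_le hu hδ u_le (hak.le.trans (hkb.trans b.le_succ))
  gcongr
  linarith [ha.1, hb.1]

end TailApprox

/-! ### Hellinger distance -/

lemma sqrt_sub_sqrt_sq_le_abs_sub {x y : ℝ} (hx : 0 ≤ x) (hy : 0 ≤ y) :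
    (√x - √y) ^ 2 ≤ |x - y| := by
  have factor : |x - y| = |√x - √y| * (√x + √y) := by
    rw [← abs_of_nonneg (add_nonneg (sqrt_nonneg x) (sqrt_nonneg y)), ← abs_mul]
    congr 1
    linear_combination -sq_sqrt hx + sq_sqrt hy
  rw [factor, ← sq_abs, sq]
  gcongr
  exact abs_sub_le_iff.2 ⟨by linarith [sqrt_nonneg y], by linarith [sqrt_nonneg x]⟩

section Hellinger

variable {p q r : ℝ → ℝ}

lemma integrable_sqrt_sub_sqrt_sq (hp : Integrable p) (hq : Integrable q)
    (p_nonneg : ∀ x, 0 ≤ p x) (q_nonneg : ∀ x, 0 ≤ q x) :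
    Integrable fun x ↦ (√(p x) - √(q x)) ^ 2 := by
  refine (hp.sub hq).abs.mono'
    ((hp.aemeasurable.sqrt.sub hq.aemeasurable.sqrt).pow_const 2).aestronglyMeasurable
    (.of_forall fun x ↦ ?_)
  rw [Real.norm_of_nonneg (sq_nonneg _)]
  exact sqrt_sub_sqrt_sq_le_abs_sub (p_nonneg x) (q_nonneg x)

lemma hellingerSq_le_integral_of_le {F : ℝ → ℝ} (hF : Integrable F)
    (h : ∀ x, (√(p x) - √(q x)) ^ 2 ≤ F x) : hellingerSq p q ≤ ∫ x, F x :=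
  integral_mono_of_nonneg (.of_forall fun _ ↦ sq_nonneg _) hF (.of_forall h)

lemma hellingerSq_le_integral_sub (hp : Integrable p) (hq : Integrable q)
    (p_nonneg : ∀ x, 0 ≤ p x) (hpq : ∀ x, p x ≤ q x) :
    hellingerSq p q ≤ ∫ x, (q x - p x) := by
  refine hellingerSq_le_integral_of_le (hq.sub hp) fun x ↦ ?_
  have h := sqrt_sub_sqrt_sq_le_abs_sub (p_nonneg x) ((p_nonneg x).trans (hpq x))
  rwa [abs_sub_comm, abs_of_nonneg (sub_nonneg.2 (hpq x))] at h

lemma hellingerSq_triangle (hp : Integrable p) (hq : Integrable q) (hr : Integrable r)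
    (p_nonneg : ∀ x, 0 ≤ p x) (q_nonneg : ∀ x, 0 ≤ q x) (r_nonneg : ∀ x, 0 ≤ r x) :
    hellingerSq p r ≤ 2 * (hellingerSq p q + hellingerSq q r) := by
  have pq_integrable := integrable_sqrt_sub_sqrt_sq hp hq p_nonneg q_nonneg
  have qr_integrable := integrable_sqrt_sub_sqrt_sq hq hr q_nonneg r_nonneg
  rw [hellingerSq.eq_def p q, hellingerSq.eq_def q r, ← integral_add pq_integrable qr_integrable,
    ← integral_const_mul]
  refine hellingerSq_le_integral_of_le ((pq_integrable.add qr_integrable).const_mul 2) fun x ↦ ?_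
  simpa using add_sq_le (a := √(p x) - √(q x)) (b := √(q x) - √(r x))

lemma hellingerSq_normalize_le (q_nonneg : ∀ x, 0 ≤ q x) (mass_pos : 0 < ∫ x, q x) :
    hellingerSq q (fun x ↦ q x / ∫ y, q y) ≤ ((∫ x, q x) - 1) ^ 2 := by
  set Z := ∫ x, q x with hZ
  have sqrt_pos : 0 < √Z := Real.sqrt_pos.2 mass_pos
  have pointwise (x : ℝ) : (√(q x) - √(q x / Z)) ^ 2 = (1 - 1 / √Z) ^ 2 * q x := by
    rw [sqrt_div (q_nonneg x)]
    linear_combination (1 - 1 / √Z) ^ 2 * sq_sqrt (q_nonneg x)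
  calc hellingerSq q (fun x ↦ q x / Z) = (√Z - 1) ^ 2 := by
        rw [hellingerSq, integral_congr_ae (.of_forall pointwise), integral_const_mul, ← hZ]
        nth_rw 2 [← sq_sqrt mass_pos.le]
        field_simp
    _ ≤ (√Z - 1) ^ 2 * (√Z + 1) ^ 2 := le_mul_of_one_le_right (sq_nonneg _) (by nlinarith)
    _ = (Z - 1) ^ 2 := by rw [← mul_pow, mul_comm, ← sq_sub_sq, sq_sqrt mass_pos.le, one_pow]

end Hellinger

/-! ### Truncated exponentials -/

/-- The function `e^φ` cut off outside `[A, B]`. -/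
def truncExp (φ : ℝ → ℝ) (A B : ℝ) : ℝ → ℝ := (Icc A B).indicator fun x ↦ exp (φ x)

/-- The probability density proportional to `e^φ` on `[A, B]`. -/
def truncExpDensity (φ : ℝ → ℝ) (A B x : ℝ) : ℝ := truncExp φ A B x / ∫ y, truncExp φ A B y

section TruncExp

variable {φ : ℝ → ℝ} {A B : ℝ}

lemma truncExp_of_mem {x : ℝ} (hx : x ∈ Icc A B) : truncExp φ A B x = exp (φ x) :=
  indicator_of_mem hx _

lemma truncExp_of_notMem {x : ℝ} (hx : x ∉ Icc A B) : truncExp φ A B x = 0 :=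
  indicator_of_notMem hx _

lemma truncExp_nonneg (x : ℝ) : 0 ≤ truncExp φ A B x :=
  indicator_nonneg (fun _ _ ↦ (exp_pos _).le) x

lemma integrable_truncExp (hφ : Continuous φ) : Integrable (truncExp φ A B) :=
  (integrable_indicator_iff measurableSet_Icc).2 hφ.rexp.continuousOn.integrableOn_Icc

lemma isDensityFn_truncExpDensity (hφ : Continuous φ) (mass_pos : 0 < ∫ y, truncExp φ A B y) :
    IsDensityFn (truncExpDensity φ A B) := by
  refine ⟨?_, fun x ↦ div_nonneg (truncExp_nonneg x) mass_pos.le, ?_⟩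
  · exact (hφ.rexp.measurable.indicator measurableSet_Icc).div_const _
  · simp_rw [truncExpDensity, integral_div, div_self mass_pos.ne']

lemma truncExpDensity_eq_indicator (mass_pos : 0 < ∫ y, truncExp φ A B y) (x : ℝ) :
    truncExpDensity φ A B x =
      (Icc A B).indicator (fun x ↦ exp (φ x - log (∫ y, truncExp φ A B y))) x := by
  by_cases hx : x ∈ Icc A B
  · rw [indicator_of_mem hx, truncExpDensity, truncExp_of_mem hx, exp_sub, exp_log mass_pos]
  · rw [indicator_of_notMem hx, truncExpDensity, truncExp_of_notMem hx, zero_div]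

lemma setOf_truncExpDensity_pos (mass_pos : 0 < ∫ y, truncExp φ A B y) :
    {x | 0 < truncExpDensity φ A B x} = Icc A B := by
  ext x
  rw [mem_ofPred_eq, truncExpDensity_eq_indicator mass_pos]
  by_cases hx : x ∈ Icc A B <;> simp [hx, exp_pos]

lemma isLogConcaveFn_indicator_exp {s : Set ℝ} (hφ : ConcaveOn ℝ s φ) :
    IsLogConcaveFn (s.indicator fun x ↦ exp (φ x)) := by
  intro x y t ht₀ ht₁
  have rhs_nonneg : 0 ≤ s.indicator (fun x ↦ exp (φ x)) (t * x + (1 - t) * y) :=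
    indicator_nonneg (fun _ _ ↦ (exp_pos _).le) _
  rcases ht₀.eq_or_lt with rfl | ht₀
  · simp
  rcases ht₁.eq_or_lt with rfl | ht₁
  · simp
  by_cases hx : x ∈ s
  swap
  · rwa [indicator_of_notMem hx, zero_rpow ht₀.ne', zero_mul]
  by_cases hy : y ∈ s
  swap
  · rwa [indicator_of_notMem hy, zero_rpow (sub_pos.2 ht₁).ne', mul_zero]
  have combination_mem : t * x + (1 - t) * y ∈ s :=
    hφ.1 hx hy ht₀.le (sub_pos.2 ht₁).le (add_sub_cancel _ _)
  rw [indicator_of_mem hx, indicator_of_mem hy, indicator_of_mem combination_mem, ← exp_mul,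
    ← exp_mul, ← exp_add, exp_le_exp, mul_comm (φ x), mul_comm (φ y)]
  exact hφ.2 hx hy ht₀.le (sub_pos.2 ht₁).le (add_sub_cancel _ _)

lemma isLogConcaveFn_truncExpDensity (hφ : ConcaveOn ℝ univ φ)
    (mass_pos : 0 < ∫ y, truncExp φ A B y) : IsLogConcaveFn (truncExpDensity φ A B) := by
  rw [funext (truncExpDensity_eq_indicator mass_pos)]
  exact isLogConcaveFn_indicator_exp
    ((hφ.sub (convexOn_const _ convex_univ)).subset (subset_univ _) (convex_Icc A B))

end TruncExp

/-! ### Comparing a density with a truncated exponential -/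

lemma abs_exp_sub_exp_le {x y ε : ℝ} (hε : ε ≤ 1) (h : |x - y| ≤ ε) :
    |exp x - exp y| ≤ 2 * ε * exp y := by
  have exp_sub_one : |exp (x - y) - 1| ≤ 2 * ε :=
    (abs_exp_sub_one_le (h.trans hε)).trans (by linarith)
  calc |exp x - exp y| = |exp (x - y) - 1| * exp y := by
        rw [← abs_of_pos (exp_pos y), ← abs_mul, abs_of_pos (exp_pos y), sub_mul, ← exp_add,
          sub_add_cancel, one_mul]
    _ ≤ 2 * ε * exp y := by gcongr

lemma sqrt_exp_sub_sqrt_exp_sq_le {x y ε : ℝ} (hε : ε ≤ 1) (h : |x - y| ≤ ε) :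
    (√(exp x) - √(exp y)) ^ 2 ≤ ε ^ 2 * exp y := by
  have half_close : |x / 2 - y / 2| ≤ ε / 2 := by rw [← sub_div, abs_div, abs_two]; linarith
  calc (√(exp x) - √(exp y)) ^ 2 = |exp (x / 2) - exp (y / 2)| ^ 2 := by
        rw [← exp_half, ← exp_half, sq_abs]
    _ ≤ (2 * (ε / 2) * exp (y / 2)) ^ 2 := by
        gcongr
        exact abs_exp_sub_exp_le (by linarith [abs_nonneg (x - y)]) half_close
    _ = ε ^ 2 * exp y := by rw [exp_half]; linear_combination ε ^ 2 * sq_sqrt (exp_pos y).le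

/-- A bound for `e^u` and for the truncation of `e^φ` at the points where `φ` and `u` are not close:
the two ends `a`, `b` of the range of good approximation contribute exponential tails, and the third
term accounts for the mass of `e^u` outside the truncation interval. -/
def tailEnvelope (α β c H a b x : ℝ) : ℝ :=
  exp (2 - H) * laplaceKernel c a x + exp (2 - H) * laplaceKernel c b x +
    exp (β - H) * laplaceKernel (α / 2) 0 x

/-- `φ` is an approximation of `u` that may be truncated to `[A, B]`: it is within `ε` of `u` up to
exponential tails of height `e^{-H}`, and `[A, B]` leaves out only points far from the origin on
the scale of the envelope of `u`. -/
structure IsTruncatableApprox (φ u : ℝ → ℝ) (α β c ε H a b A B : ℝ) : Prop where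
  le_envelope : ∀ x, u x ≤ β - α * |x|
  sub_le : ∀ x, u x - ε ≤ φ x
  le_or_le : ∀ x, φ x ≤ u x + ε ∨ φ x ≤ 1 - H - c * |x - a| ∨ φ x ≤ 1 - H - c * |x - b|
  le_of_notMem : ∀ x ∉ Icc A B, 2 * H ≤ α * |x|

lemma tailEnvelope_nonneg (α β c H a b x : ℝ) : 0 ≤ tailEnvelope α β c H a b x := by
  unfold tailEnvelope laplaceKernel; positivity

lemma integrable_laplace_add_tailEnvelope {α c : ℝ} (hα : 0 < α) (hc : 0 < c) (β H a b r : ℝ) :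
    Integrable fun x ↦ r * exp (β - α * |x|) + tailEnvelope α β c H a b x := by
  simp_rw [exp_sub_mul_abs_eq]
  exact (((integrable_laplaceKernel hα 0).const_mul _).const_mul r).add
    ((((integrable_laplaceKernel hc a).const_mul _).add
      ((integrable_laplaceKernel hc b).const_mul _)).add
      ((integrable_laplaceKernel (half_pos hα) 0).const_mul _))

lemma integral_laplace_add_tailEnvelope_le {α c H s r : ℝ} (hα : 0 < α) (hc : 0 < c) (β a b : ℝ)
    (hs : exp (-H) ≤ s) (hrs : r ≤ 2 * s) :
    ∫ x, (r * exp (β - α * |x|) + tailEnvelope α β c H a b x) ≤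
      (8 * exp β / α + 4 * exp 2 / c) * s := by
  have kernel {d : ℝ} (hd : 0 < d) (k τ : ℝ) := (integrable_laplaceKernel hd τ).const_mul k
  have half := half_pos hα
  calc ∫ x, (r * exp (β - α * |x|) + tailEnvelope α β c H a b x)
      = r * (exp β * (2 / α)) + (exp (2 - H) * (2 / c) + exp (2 - H) * (2 / c) +
          exp (β - H) * (2 / (α / 2))) := by
        simp_rw [exp_sub_mul_abs_eq, tailEnvelope]
        rw [integral_add ((kernel hα _ 0).const_mul r)
            (((kernel hc _ a).fun_add (kernel hc _ b)).fun_add (kernel half _ 0)),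
          integral_add ((kernel hc _ a).fun_add (kernel hc _ b)) (kernel half _ 0),
          integral_add (kernel hc _ a) (kernel hc _ b)]
        simp_rw [integral_const_mul, integral_laplaceKernel hα, integral_laplaceKernel hc,
          integral_laplaceKernel half]
    _ = r * (2 * exp β / α) + exp (-H) * (4 * exp 2 / c + 4 * exp β / α) := by
        simp_rw [sub_eq_add_neg, exp_add]
        field_simp
        ring
    _ ≤ 2 * s * (2 * exp β / α) + s * (4 * exp 2 / c + 4 * exp β / α) := by gcongr
    _ = (8 * exp β / α + 4 * exp 2 / c) * s := by ring

lemma integrable_exp_of_le_envelope {u : ℝ → ℝ} {α β : ℝ} (hα : 0 < α) (hu : Continuous u)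
    (u_le : ∀ x, u x ≤ β - α * |x|) : Integrable fun x ↦ exp (u x) := by
  refine ((integrable_laplaceKernel hα 0).const_mul (exp β)).mono'
    hu.rexp.aestronglyMeasurable (.of_forall fun x ↦ ?_)
  rw [Real.norm_of_nonneg (exp_pos _).le, ← exp_sub_mul_abs_eq]
  exact exp_le_exp.2 (u_le x)

lemma IsDensityFn.integrable {f : ℝ → ℝ} (hf : IsDensityFn f) : Integrable f :=
  .of_integral_ne_zero (hf.2.2 ▸ one_ne_zero)

/-- The mass of the truncated exponential is within this multiple of `ε` of `1`: the first term
comes from replacing the density by a Lipschitz majorant, the second from the approximation error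
and the cutoff, the third from the exponential tails. -/
def massErrorConst (α β c : ℝ) : ℝ := 4 * exp β + 8 * exp β / α + 4 * exp 2 / c

namespace IsTruncatableApprox

variable {φ u : ℝ → ℝ} {α β c ε H a b A B : ℝ}

lemma close_or_le_tailEnvelope (h : IsTruncatableApprox φ u α β c ε H a b A B) (hε : ε ≤ 1)
    (x : ℝ) :
    |φ x - u x| ≤ ε ∧ truncExp φ A B x = exp (φ x) ∨
      exp (u x) ≤ tailEnvelope α β c H a b x ∧
        truncExp φ A B x ≤ tailEnvelope α β c H a b x := by
  have kernel_nonneg (k d τ : ℝ) : 0 ≤ exp k * laplaceKernel d τ x := by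
    unfold laplaceKernel; positivity
  have at_a := kernel_nonneg (2 - H) c a
  have at_b := kernel_nonneg (2 - H) c b
  have at_zero := kernel_nonneg (β - H) (α / 2) 0
  by_cases hx : x ∈ Icc A B
  swap
  · refine .inr ⟨?_, (truncExp_of_notMem hx).trans_le (tailEnvelope_nonneg ..)⟩
    have : exp (u x) ≤ exp (β - H) * laplaceKernel (α / 2) 0 x := by
      rw [laplaceKernel, ← exp_add, sub_zero, exp_le_exp]
      linarith [h.le_of_notMem x hx, h.le_envelope x]
    unfold tailEnvelope; linarith
  rw [truncExp_of_mem hx]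
  rcases h.le_or_le x with close | tail
  · exact .inl ⟨abs_sub_le_iff.2 ⟨by linarith, by linarith [h.sub_le x]⟩, rfl⟩
  · have succ_le : exp (1 + φ x) ≤ tailEnvelope α β c H a b x := by
      have le_kernel {τ : ℝ} (hτ : φ x ≤ 1 - H - c * |x - τ|) :
          exp (1 + φ x) ≤ exp (2 - H) * laplaceKernel c τ x := by
        rw [laplaceKernel, ← exp_add, exp_le_exp]; linarith
      unfold tailEnvelope
      rcases tail with tail | tail <;> linarith [le_kernel tail]
    exact .inr ⟨(exp_le_exp.2 (by linarith [h.sub_le x])).trans succ_le,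
      (exp_le_exp.2 (by linarith)).trans succ_le⟩

lemma abs_truncExp_sub_exp_le (h : IsTruncatableApprox φ u α β c ε H a b A B) (hε₀ : 0 ≤ ε)
    (hε : ε ≤ 1) (x : ℝ) :
    |truncExp φ A B x - exp (u x)| ≤
      2 * ε * exp (β - α * |x|) + tailEnvelope α β c H a b x := by
  have tail_nonneg := tailEnvelope_nonneg α β c H a b x
  have envelope_nonneg : 0 ≤ 2 * ε * exp (β - α * |x|) := by positivity
  rcases h.close_or_le_tailEnvelope hε x with ⟨close, trunc_eq⟩ | ⟨u_le, trunc_le⟩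
  · have := abs_exp_sub_exp_le hε close
    have : 2 * ε * exp (u x) ≤ 2 * ε * exp (β - α * |x|) := by
      gcongr; exact h.le_envelope x
    rw [trunc_eq]; linarith
  · refine abs_sub_le_iff.2 ⟨?_, ?_⟩ <;>
      linarith [exp_pos (u x), truncExp_nonneg (φ := φ) (A := A) (B := B) x]

lemma sqrt_exp_sub_sqrt_truncExp_sq_le (h : IsTruncatableApprox φ u α β c ε H a b A B)
    (hε : ε ≤ 1) (x : ℝ) :
    (√(exp (u x)) - √(truncExp φ A B x)) ^ 2 ≤
      ε ^ 2 * exp (β - α * |x|) + tailEnvelope α β c H a b x := by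
  have tail_nonneg := tailEnvelope_nonneg α β c H a b x
  have envelope_nonneg : 0 ≤ ε ^ 2 * exp (β - α * |x|) := by positivity
  rcases h.close_or_le_tailEnvelope hε x with ⟨close, trunc_eq⟩ | ⟨u_le, trunc_le⟩
  · have := sqrt_exp_sub_sqrt_exp_sq_le hε close
    have : ε ^ 2 * exp (u x) ≤ ε ^ 2 * exp (β - α * |x|) := by
      gcongr; exact h.le_envelope x
    rw [trunc_eq, sub_sq_comm]; linarith
  · have trunc_nonneg := truncExp_nonneg (φ := φ) (A := A) (B := B) x
    refine (sqrt_sub_sqrt_sq_le_abs_sub (exp_pos _).le trunc_nonneg).trans ?_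
    refine abs_sub_le_iff.2 ⟨?_, ?_⟩ <;> linarith [exp_pos (u x)]

variable {f : ℝ → ℝ}

lemma abs_integral_truncExp_sub_integral_exp_le (h : IsTruncatableApprox φ u α β c ε H a b A B)
    (hα : 0 < α) (hc : 0 < c) (hε₀ : 0 ≤ ε) (hε : ε ≤ 1) (hH : exp (-H) ≤ ε ^ 2)
    (hφ : Continuous φ) (hu : Continuous u) :
    |(∫ x, truncExp φ A B x) - ∫ x, exp (u x)| ≤ (8 * exp β / α + 4 * exp 2 / c) * ε := by
  rw [← integral_sub (integrable_truncExp hφ) (integrable_exp_of_le_envelope hα hu h.le_envelope)]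
  refine (norm_integral_le_of_norm_le (integrable_laplace_add_tailEnvelope hα hc β H a b (2 * ε))
    (.of_forall fun x ↦ (norm_eq_abs _).trans_le (h.abs_truncExp_sub_exp_le hε₀ hε x))).trans ?_
  exact integral_laplace_add_tailEnvelope_le hα hc β a b (hH.trans (by nlinarith)) le_rfl

lemma abs_integral_truncExp_sub_one_le (h : IsTruncatableApprox φ u α β c ε H a b A B)
    (hα : 0 < α) (hc : 0 < c) (hε₀ : 0 ≤ ε) (hε : ε ≤ 1) (hH : exp (-H) ≤ ε ^ 2)
    (hφ : Continuous φ) (hu : Continuous u) (hf : IsDensityFn f) (f_le : ∀ x, f x ≤ exp (u x))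
    (gap_le : ∫ x, (exp (u x) - f x) ≤ 4 * exp β * ε ^ 2) :
    |(∫ x, truncExp φ A B x) - 1| ≤ massErrorConst α β c * ε := by
  have trunc_close := h.abs_integral_truncExp_sub_integral_exp_le hα hc hε₀ hε hH hφ hu
  have majorant_close : |(∫ x, exp (u x)) - 1| ≤ 4 * exp β * ε := by
    rw [← hf.2.2,
      ← integral_sub (integrable_exp_of_le_envelope hα hu h.le_envelope) hf.integrable,
      abs_of_nonneg (integral_nonneg fun x ↦ sub_nonneg.2 (f_le x))]
    exact gap_le.trans (by gcongr; nlinarith)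
  rw [massErrorConst]
  linarith [abs_sub_le (∫ x, truncExp φ A B x) (∫ x, exp (u x)) 1]

lemma hellingerSq_exp_truncExp_le (h : IsTruncatableApprox φ u α β c ε H a b A B)
    (hα : 0 < α) (hc : 0 < c) (hε : ε ≤ 1) (hH : exp (-H) ≤ ε ^ 2) :
    hellingerSq (fun x ↦ exp (u x)) (truncExp φ A B) ≤
      (8 * exp β / α + 4 * exp 2 / c) * ε ^ 2 :=
  (hellingerSq_le_integral_of_le (integrable_laplace_add_tailEnvelope hα hc β H a b (ε ^ 2))
    (h.sqrt_exp_sub_sqrt_truncExp_sq_le hε)).trans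
    (integral_laplace_add_tailEnvelope_le hα hc β a b hH (by nlinarith))

lemma hellingerSq_truncExpDensity_le (h : IsTruncatableApprox φ u α β c ε H a b A B)
    (hα : 0 < α) (hc : 0 < c) (hε₀ : 0 ≤ ε) (hε : ε ≤ 1) (hH : exp (-H) ≤ ε ^ 2)
    (hφ : Continuous φ) (hu : Continuous u) (hf : IsDensityFn f) (f_le : ∀ x, f x ≤ exp (u x))
    (gap_le : ∫ x, (exp (u x) - f x) ≤ 4 * exp β * ε ^ 2)
    (mass_pos : 0 < ∫ x, truncExp φ A B x) :
    hellingerSq f (truncExpDensity φ A B) ≤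
      (4 * massErrorConst α β c + 2 * massErrorConst α β c ^ 2) * ε ^ 2 := by
  have exp_u_integrable := integrable_exp_of_le_envelope hα hu h.le_envelope
  have trunc_integrable := integrable_truncExp (A := A) (B := B) hφ
  have trunc_density := isDensityFn_truncExpDensity hφ mass_pos
  have f_u := (hellingerSq_le_integral_sub hf.integrable exp_u_integrable hf.2.1 f_le).trans gap_le
  have u_trunc := h.hellingerSq_exp_truncExp_le hα hc hε hH
  have f_trunc := hellingerSq_triangle hf.integrable exp_u_integrable trunc_integrable hf.2.1
    (fun x ↦ (exp_pos _).le) truncExp_nonneg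
  have trunc_normalized : hellingerSq (truncExp φ A B) (truncExpDensity φ A B) ≤
      (massErrorConst α β c * ε) ^ 2 :=
    (hellingerSq_normalize_le truncExp_nonneg mass_pos).trans <| sq_le_sq.2 <|
      (h.abs_integral_truncExp_sub_one_le hα hc hε₀ hε hH hφ hu hf f_le gap_le).trans
        (le_abs_self _)
  calc hellingerSq f (truncExpDensity φ A B)
      ≤ 2 * (hellingerSq f (truncExp φ A B) +
          hellingerSq (truncExp φ A B) (truncExpDensity φ A B)) :=
        hellingerSq_triangle hf.integrable trunc_integrable trunc_density.integrable hf.2.1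
          truncExp_nonneg trunc_density.2.1
    _ ≤ 2 * (2 * (4 * exp β * ε ^ 2 + (8 * exp β / α + 4 * exp 2 / c) * ε ^ 2) +
          (massErrorConst α β c * ε) ^ 2) := by linarith
    _ = (4 * massErrorConst α β c + 2 * massErrorConst α β c ^ 2) * ε ^ 2 := by
        rw [massErrorConst]; ring

end IsTruncatableApprox

/-! ### Spline densities -/

namespace ConcaveSpline

variable {N : ℕ} (φ : ConcaveSpline N) {A B : ℝ}

/-- The function `e^φ` on `[A, B]`, with the origin of the spline placed at `A`, extended by `0`. -/
def shiftedTruncExp (A B : ℝ) : ℝ → ℝ := truncExp (fun x ↦ φ.eval (x - A)) A B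

/-- The piecewise log-linear probability density proportional to `φ.shiftedTruncExp A B`. -/
def density (A B : ℝ) : ℝ → ℝ := truncExpDensity (fun x ↦ φ.eval (x - A)) A B

lemma continuous_eval_sub (A : ℝ) : Continuous fun x ↦ φ.eval (x - A) :=
  φ.continuous_eval.comp (continuous_sub_right A)

lemma isLogConcaveFn_density (mass_pos : 0 < ∫ x, φ.shiftedTruncExp A B x) :
    IsLogConcaveFn (φ.density A B) := by
  refine isLogConcaveFn_truncExpDensity ?_ mass_pos
  simpa [Function.comp_def, sub_eq_neg_add] using φ.concaveOn_eval.translate_right (-A)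

variable {φ} in
lemma neZero_of_finalSlope_lt (h : φ.finalSlope < φ.slope) : NeZero N := by
  refine ⟨fun hN ↦ h.ne ?_⟩
  subst hN
  simp [finalSlope]

lemma density_eq_mixture [NeZero N] (mass_pos : 0 < ∫ x, φ.shiftedTruncExp A B x) (x : ℝ) :
    φ.density A B x = (Icc A B).indicator (fun y ↦ exp (φ.mixtureCoeff *
      (∑ i, min (φ.knot i) (y - A) / φ.knot i * φ.mixtureWeight i) - -φ.finalSlope * (y - A) +
        (φ.height - log (∫ x, φ.shiftedTruncExp A B x)))) x := by
  rw [density, truncExpDensity_eq_indicator mass_pos]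
  congr! 3 with y
  rw [eval_eq_mixture, shiftedTruncExp]
  ring

lemma exists_mixture_representation {G : ℝ} (hAB : A ≤ B) (knot_le : ∀ i, φ.knot i ≤ B - A)
    (slope_mem : φ.slope ∈ Ioc 0 G) (neg_finalSlope_mem : -φ.finalSlope ∈ Ioc 0 G)
    (mass_pos : 0 < ∫ x, φ.shiftedTruncExp A B x) :
    ∃ (γ₁ γ₂ γ₃ : ℝ) (p : Fin N → ℝ), γ₁ ∈ Icc 0 (2 * (B - A) * G) ∧ |γ₂| ≤ G ∧
      (∀ i, 0 ≤ p i) ∧ ∑ i, p i = 1 ∧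
      ∀ x, φ.density A B x = (Icc A B).indicator (fun y ↦ exp
        (γ₁ * (∑ i, min (φ.knot i) (y - A) / φ.knot i * p i) - γ₂ * (y - A) + γ₃)) x := by
  have := neZero_of_finalSlope_lt (by linarith [slope_mem.1, neg_finalSlope_mem.1])
  refine ⟨φ.mixtureCoeff, -φ.finalSlope, _, φ.mixtureWeight, ⟨φ.mixtureCoeff_pos.le, ?_⟩,
    (abs_of_pos neg_finalSlope_mem.1).trans_le neg_finalSlope_mem.2, φ.mixtureWeight_nonneg,
    φ.sum_mixtureWeight, φ.density_eq_mixture mass_pos⟩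
  calc φ.mixtureCoeff ≤ (B - A) * (φ.slope - φ.finalSlope) := φ.mixtureCoeff_le knot_le
    _ ≤ (B - A) * (2 * G) := by
      gcongr
      linarith [slope_mem.2, neg_finalSlope_mem.2]
    _ = 2 * (B - A) * G := by ring

lemma le_mul_density {f : ℝ → ℝ} {M : ℝ} (mass_pos : 0 < ∫ x, φ.shiftedTruncExp A B x)
    (mass_le : ∫ x, φ.shiftedTruncExp A B x ≤ M) {k x : ℝ} (hx : x ∈ Icc A B)
    (f_le : f x ≤ exp (φ.eval (x - A) + k)) : f x ≤ M * exp k * φ.density A B x := by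
  have density_pos : 0 < φ.density A B x := (setOf_truncExpDensity_pos mass_pos).ge hx
  calc f x ≤ exp (φ.eval (x - A)) * exp k := by rwa [← exp_add]
    _ = (∫ x, φ.shiftedTruncExp A B x) * exp k * φ.density A B x := by
      rw [density, truncExpDensity, truncExp_of_mem hx]
      have := mass_pos.ne'
      unfold shiftedTruncExp at *
      field_simp
    _ ≤ M * exp k * φ.density A B x := by gcongr

lemma IsTailApprox.isTruncatableApprox {φ : ConcaveSpline N} {u : ℝ → ℝ}
    {δ α β c G η ε ε' H a b : ℝ}
    (h : φ.IsTailApprox (fun y ↦ u (A + y)) δ c G η ε' (1 - H) a b) (hη : η ≤ ε) (hε' : ε' ≤ ε)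
    (u_le : ∀ x, u x ≤ β - α * |x|) (le_of_notMem : ∀ x ∉ Icc A B, 2 * H ≤ α * |x|) :
    IsTruncatableApprox (fun x ↦ φ.eval (x - A)) u α β c ε H (A + a) (A + b) A B where
  le_envelope := u_le
  sub_le x := by
    have := h.sub_le_eval (x - A)
    rw [add_sub_cancel] at this
    linarith
  le_or_le x := by
    have := h.eval_le (x - A)
    rw [add_sub_cancel, sub_sub x A a, sub_sub x A b] at this
    exact this.imp_left fun h ↦ by linarith
  le_of_notMem := le_of_notMem

end ConcaveSpline

/-! ### The choice of scales -/

/-- The accuracy, uniform in the bulk of the distribution, to which the logarithm of the density is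
approximated at sample size `n`. -/
def logError (n : ℝ) : ℝ := 4 * (log n / n ^ (2 / 5 : ℝ))

/-- `n` is so large that the asymptotic comparisons of scales used in the proof hold for the class
with parameters `α` and `β`. In `log_peak_le`, `2 log(α/8) - β` is the lower bound on the maximum of
the log-density provided by `IsDensityFn.exists_pos_le`. -/
structure IsLargeSampleSize (α β n : ℝ) : Prop where
  pos : 0 < n
  one_le_log : 1 ≤ log n
  beta_lt : β < 4 / 5 * log n
  log_peak_le : 2 * (β - 2 * log (α / 8) + 3) ≤ 4 / 5 * log n
  le_rpow : α ≤ n ^ (4 / 5 : ℝ)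
  two_le_rpow : 2 ≤ n ^ (1 / 5 : ℝ)
  logError_le_one : logError n ≤ 1
  mul_logError_le : massErrorConst α β (α / 8) * logError n ≤ 1 / 2

lemma tendsto_logError_atTop : Tendsto logError atTop (nhds 0) := by
  unfold logError
  simpa only [mul_zero] using
    (isLittleO_log_rpow_atTop (r := 2 / 5) (by norm_num)).tendsto_div_nhds_zero.const_mul 4

lemma eventually_isLargeSampleSize (α β : ℝ) : ∀ᶠ n in atTop, IsLargeSampleSize α β n := by
  have log_ge (k : ℝ) := tendsto_log_atTop.eventually_ge_atTop k
  have rpow_ge {r : ℝ} (hr : 0 < r) (k : ℝ) := (tendsto_rpow_atTop hr).eventually_ge_atTop k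
  have mul_logError :
      Tendsto (fun n ↦ massErrorConst α β (α / 8) * logError n) atTop (nhds 0) := by
    simpa using tendsto_logError_atTop.const_mul (massErrorConst α β (α / 8))
  filter_upwards [eventually_gt_atTop 0, log_ge 1,
    tendsto_log_atTop.eventually_gt_atTop (5 / 4 * β),
    log_ge (5 / 4 * (2 * (β - 2 * log (α / 8) + 3))), rpow_ge (by norm_num : (0 : ℝ) < 4 / 5) α,
    rpow_ge (by norm_num : (0 : ℝ) < 1 / 5) 2,
    tendsto_logError_atTop.eventually_le_const one_pos,
    mul_logError.eventually_le_const (half_pos one_pos)]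
    with n pos one_le_log beta_lt log_peak_le le_rpow two_le_rpow logError_le_one mul_logError_le
  exact ⟨pos, one_le_log, by linarith, by linarith, le_rpow, two_le_rpow, logError_le_one,
    mul_logError_le⟩

namespace IsLargeSampleSize

variable {α β n : ℝ}

lemma exp_mul_log (hn : IsLargeSampleSize α β n) (r : ℝ) : exp (r * log n) = n ^ r := by
  rw [rpow_def_of_pos hn.pos, mul_comm]

lemma logError_pos (hn : IsLargeSampleSize α β n) : 0 < logError n := by
  have := hn.pos
  have := hn.one_le_log
  unfold logError
  positivity

lemma lipschitz_mul_separation (hn : IsLargeSampleSize α β n) :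
    n ^ (4 / 5 : ℝ) * (n ^ (-6 / 5 : ℝ) * log n) = logError n / 4 := by
  rw [← mul_assoc, ← rpow_add hn.pos, logError, mul_div_cancel_left₀ _ four_ne_zero,
    div_eq_inv_mul (log n), ← rpow_neg hn.pos.le]
  norm_num

lemma four_div_sq_le_logError (hn : IsLargeSampleSize α β n) :
    4 / (n ^ (1 / 5 : ℝ)) ^ 2 ≤ logError n := by
  have := hn.pos
  rw [← rpow_mul_natCast hn.pos.le, logError, mul_div_assoc']
  norm_num
  gcongr
  linarith [hn.one_le_log]

lemma logError_sq (hn : IsLargeSampleSize α β n) :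
    logError n ^ 2 = 16 * ((log n) ^ 2 * n ^ (-4 / 5 : ℝ)) := by
  rw [logError, mul_pow, div_pow, ← rpow_mul_natCast hn.pos.le, div_eq_mul_inv,
    ← rpow_neg hn.pos.le]
  norm_num

lemma rpow_neg_le_logError_sq (hn : IsLargeSampleSize α β n) :
    n ^ (-4 / 5 : ℝ) ≤ logError n ^ 2 := by
  rw [hn.logError_sq, ← mul_assoc]
  exact le_mul_of_one_le_left (rpow_nonneg hn.pos.le _) (by nlinarith [hn.one_le_log])

lemma exp_neg_le_logError_sq (hn : IsLargeSampleSize α β n) :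
    exp (-(4 / 5 * log n)) ≤ logError n ^ 2 := by
  rw [← neg_mul, hn.exp_mul_log, ← neg_div]
  exact hn.rpow_neg_le_logError_sq

end IsLargeSampleSize

lemma arsinh_exp_le {H : ℝ} (hH : 0 ≤ H) : arsinh (exp H) ≤ H + 1 := by
  rw [← arsinh_sinh (H + 1), arsinh_le_arsinh, sinh_eq]
  have exp_neg_le : exp (-(H + 1)) ≤ 1 / 2 := by
    linarith [exp_le_exp.2 (by linarith : -(H + 1) ≤ -1), exp_neg_one_lt_d9]
  have one_le_exp : 1 ≤ exp H := Real.one_le_exp hH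
  rw [exp_add]
  nlinarith [exp_one_gt_d9]

/-! ### Approximation at a given sample size -/

/-- The constant in the Hellinger bound, as a multiple of `(log n)² n^(-4/5)`. -/
def hellingerConst (α β : ℝ) : ℝ :=
  16 * (4 * massErrorConst α β (α / 8) + 2 * massErrorConst α β (α / 8) ^ 2)

section Fit

variable {α β n A : ℝ} {u : ℝ → ℝ}

lemma two_mul_le_mul_abs_of_cutoff_le {L x : ℝ} (hα : 0 < α) (hx : 8 / (5 * α) * L ≤ |x|) :
    2 * (4 / 5 * L) ≤ α * |x| :=
  calc 2 * (4 / 5 * L) = α * (8 / (5 * α) * L) := by field_simp; ring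
    _ ≤ α * |x| := by gcongr

lemma mem_Icc_of_neg_le_add {H y : ℝ} (hα : 0 < α) (u_le : ∀ x, u x ≤ β - α * |x|)
    (hy : -H ≤ u (A + y)) : y ∈ Icc (-((β + H) / α) - A) ((β + H) / α - A) := by
  have abs_add_le : |A + y| ≤ (β + H) / α := by
    rw [le_div_iff₀' hα]
    linarith [u_le (A + y)]
  have := abs_le.1 abs_add_le
  constructor <;> linarith

lemma IsLargeSampleSize.exists_isTailApprox (hn : IsLargeSampleSize α β n) (hα : 0 < α)
    (hu : ConcaveOn ℝ univ u) (lip : ∀ x y, u x - u y ≤ n ^ (4 / 5 : ℝ) * |x - y|)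
    (u_le : ∀ x, u x ≤ β - α * |x|) {x₀ : ℝ} (le_u : 2 * log (α / 8) - β ≤ u x₀)
    (hA : A ≤ -(8 / (5 * α) * log n)) :
    ∃ (N : ℕ) (φ : ConcaveSpline N) (a b : ℝ),
      N ≤ n ^ (1 / 5 : ℝ) * (4 * arsinh (n ^ (4 / 5 : ℝ)) +
        (2 * ((β + 4 / 5 * log n) / α) + 2 * β + 2 * (4 / 5 * log n))) + 1 ∧
      (∀ i, φ.knot i ≤ (β + 4 / 5 * log n) / α - A) ∧
      φ.IsTailApprox (fun y ↦ u (A + y)) (n ^ (-6 / 5 : ℝ) * log n) (α / 8) (n ^ (4 / 5 : ℝ))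
        (logError n / 2) (4 / (n ^ (1 / 5 : ℝ)) ^ 2) (1 - 4 / 5 * log n) a b := by
  have log_pos : 0 < log n := one_pos.trans_le hn.one_le_log
  have hn_pos := hn.pos
  have β_lt := hn.beta_lt
  have log_peak_le := hn.log_peak_le
  set H := 4 / 5 * log n with hH
  have A_nonpos : A ≤ 0 := hA.trans (neg_nonpos.2 (by positivity))
  have cutoff_A : 2 * H ≤ α * -A := by
    have := two_mul_le_mul_abs_of_cutoff_le (x := A) (L := log n) hα
      (by rw [abs_of_nonpos A_nonpos]; linarith)
    rwa [abs_of_nonpos A_nonpos] at this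
  have u_A_lt : u (A + 0) < -H := by
    have := u_le A
    rw [abs_of_nonpos A_nonpos] at this
    rw [add_zero]
    linarith
  have x₀_ge : 0 ≤ x₀ - A := by
    have : α * |x₀| ≤ 2 * H := by linarith [u_le x₀]
    nlinarith [neg_abs_le x₀]
  obtain ⟨N, φ, a, b, N_le, knot_le, approx⟩ := _root_.exists_isTailApprox
    (u := fun y ↦ u (A + y)) (δ := n ^ (-6 / 5 : ℝ) * log n) (m := n ^ (1 / 5 : ℝ))
    (c := α / 8) (h := β - 2 * log (α / 8)) (β := β)
    (by simpa [Function.comp_def] using hu.translate_right A)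
    (fun x y ↦ by simpa using lip (A + x) (A + y)) (by positivity)
    (by linarith [hn.lipschitz_mul_separation, hn.logError_le_one]) hn.two_le_rpow
    (fun y ↦ (u_le _).trans (sub_le_self _ (by positivity)))
    (fun y ↦ mem_Icc_of_neg_le_add hα u_le) u_A_lt x₀_ge
    (by rw [add_sub_cancel]; linarith) (by linarith) (by positivity)
    (by field_simp; linarith)
  refine ⟨N, φ, a, b, N_le.trans_eq (by ring), knot_le, ?_⟩
  convert approx using 1
  linarith [hn.lipschitz_mul_separation]

lemma IsLargeSampleSize.knotCount_le (hn : IsLargeSampleSize α β n) (hα : 0 < α) :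
    n ^ (1 / 5 : ℝ) * (4 * arsinh (n ^ (4 / 5 : ℝ)) +
        (2 * ((β + 4 / 5 * log n) / α) + 2 * β + 2 * (4 / 5 * log n))) + 1 ≤
      (12 + 4 / α) * n ^ (1 / 5 : ℝ) * log n := by
  have one_le_log := hn.one_le_log
  have two_le_rpow := hn.two_le_rpow
  have β_lt := hn.beta_lt
  have arsinh_le : arsinh (n ^ (4 / 5 : ℝ)) ≤ 9 / 5 * log n := by
    rw [← hn.exp_mul_log]
    linarith [arsinh_exp_le (by linarith : 0 ≤ 4 / 5 * log n)]
  have width_le : 2 * ((β + 4 / 5 * log n) / α) ≤ 4 / α * log n :=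
    calc 2 * ((β + 4 / 5 * log n) / α) ≤ 2 * (2 * log n / α) := by gcongr; linarith
      _ = 4 / α * log n := by ring
  calc _ ≤ n ^ (1 / 5 : ℝ) * ((11 + 4 / α) * log n) + n ^ (1 / 5 : ℝ) * log n := by
        gcongr
        · linarith
        · nlinarith
    _ = (12 + 4 / α) * n ^ (1 / 5 : ℝ) * log n := by ring

lemma IsLargeSampleSize.exists_lipschitz_concave_majorant {f : ℝ → ℝ}
    (hn : IsLargeSampleSize α β n) (hα : 0 < α) (hf : IsDensityFn f) (f_lc : IsLogConcaveFn f)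
    (f_le : ∀ x, f x ≤ exp (β - α * |x|)) :
    ∃ u : ℝ → ℝ, ConcaveOn ℝ univ u ∧ (∀ x y, u x - u y ≤ n ^ (4 / 5 : ℝ) * |x - y|) ∧
      (∀ x, f x ≤ exp (u x)) ∧ (∀ x, u x ≤ β - α * |x|) ∧
      (∃ x₀, 2 * log (α / 8) - β ≤ u x₀) ∧
      ∫ x, (exp (u x) - f x) ≤ 4 * exp β * logError n ^ 2 := by
  obtain ⟨u, hu, lip, f_le_exp, u_le, gap_le⟩ :=
    f_lc.exists_lipschitz_concave_majorant hf hα hn.le_rpow f_le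
  obtain ⟨x₀, le_f⟩ := hf.exists_pos_le hα f_le
  refine ⟨u, hu, lip, f_le_exp, u_le, ⟨x₀, ?_⟩, gap_le.trans ?_⟩
  · rw [← exp_le_exp, sub_eq_add_neg, exp_add, mul_comm, ← log_rpow (by positivity),
      exp_log (by positivity), mul_comm]
    exact_mod_cast le_f.trans (f_le_exp x₀)
  · rw [div_eq_mul_inv, ← rpow_neg hn.pos.le, ← neg_div]
    gcongr
    exact hn.rpow_neg_le_logError_sq

section Truncation

variable {B a b : ℝ} {φ f : ℝ → ℝ}

lemma IsLargeSampleSize.truncExp_mass_mem (hn : IsLargeSampleSize α β n) (hα : 0 < α)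
    (h : IsTruncatableApprox φ u α β (α / 8) (logError n) (4 / 5 * log n) a b A B)
    (hφ : Continuous φ) (hu : Continuous u) (hf : IsDensityFn f) (f_le : ∀ x, f x ≤ exp (u x))
    (gap_le : ∫ x, (exp (u x) - f x) ≤ 4 * exp β * logError n ^ 2) :
    ∫ x, truncExp φ A B x ∈ Icc (1 / 2) 2 := by
  have mass_error := (h.abs_integral_truncExp_sub_one_le hα (by positivity) hn.logError_pos.le
    hn.logError_le_one hn.exp_neg_le_logError_sq hφ hu hf f_le gap_le).trans hn.mul_logError_le
  have := abs_le.1 mass_error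
  constructor <;> linarith

lemma IsLargeSampleSize.hellingerSq_truncExpDensity_le (hn : IsLargeSampleSize α β n)
    (hα : 0 < α)
    (h : IsTruncatableApprox φ u α β (α / 8) (logError n) (4 / 5 * log n) a b A B)
    (hφ : Continuous φ) (hu : Continuous u) (hf : IsDensityFn f) (f_le : ∀ x, f x ≤ exp (u x))
    (gap_le : ∫ x, (exp (u x) - f x) ≤ 4 * exp β * logError n ^ 2) :
    hellingerSq f (truncExpDensity φ A B) ≤
      hellingerConst α β * ((log n) ^ 2 * n ^ (-4 / 5 : ℝ)) := by
  have mass_mem := hn.truncExp_mass_mem hα h hφ hu hf f_le gap_le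
  refine (h.hellingerSq_truncExpDensity_le hα (by positivity) hn.logError_pos.le
    hn.logError_le_one hn.exp_neg_le_logError_sq hφ hu hf f_le gap_le
    (half_pos one_pos |>.trans_le mass_mem.1)).trans_eq ?_
  rw [hn.logError_sq, hellingerConst]
  ring

end Truncation

end Fit

lemma le_abs_sub_of_add_le {ι : Type*} [LinearOrder ι] {z : ι → ℝ} {δ : ℝ}
    (separated : ∀ i j, i < j → z i + δ ≤ z j) {i j : ι} (hij : i ≠ j) : δ ≤ |z i - z j| := by
  rcases hij.lt_or_gt with hij | hij
  · linarith [separated i j hij, neg_le_abs (z i - z j)]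
  · linarith [separated j i hij, le_abs_self (z i - z j)]

section Approximation

variable {α β n A B : ℝ} {f : ℝ → ℝ}

lemma IsLargeSampleSize.exists_spline (hn : IsLargeSampleSize α β n) (hα : 0 < α)
    (hf : IsDensityFn f) (f_lc : IsLogConcaveFn f) (f_le : ∀ x, f x ≤ exp (β - α * |x|))
    (hA : A ≤ -(8 / (5 * α) * log n)) (hB : 8 / (5 * α) * log n ≤ B) :
    ∃ (N : ℕ) (φ : ConcaveSpline N),
      N ≤ (12 + 4 / α) * n ^ (1 / 5 : ℝ) * log n ∧ (∀ i, φ.knot i ≤ B - A) ∧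
      (∀ i j, i < j → φ.knot i + n ^ (-6 / 5 : ℝ) * log n ≤ φ.knot j) ∧
      φ.slope ∈ Ioc 0 (n ^ (4 / 5 : ℝ)) ∧ -φ.finalSlope ∈ Ioc 0 (n ^ (4 / 5 : ℝ)) ∧
      ∫ x, φ.shiftedTruncExp A B x ∈ Icc (1 / 2) 2 ∧
      (∀ x, f x ≤ exp (φ.eval (x - A) + 1)) ∧
      hellingerSq f (φ.density A B) ≤
        hellingerConst α β * ((log n) ^ 2 * n ^ (-4 / 5 : ℝ)) := by
  obtain ⟨u, hu, lip, f_le_exp, u_le, ⟨x₀, le_u⟩, gap_le⟩ :=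
    hn.exists_lipschitz_concave_majorant hα hf f_lc f_le
  obtain ⟨N, φ, a, b, N_le, knot_le, approx⟩ := hn.exists_isTailApprox hα hu lip u_le le_u hA
  have logError_pos := hn.logError_pos
  have far_of_notMem (x : ℝ) (hx : x ∉ Icc A B) : 2 * (4 / 5 * log n) ≤ α * |x| := by
    refine two_mul_le_mul_abs_of_cutoff_le hα (le_abs'.2 ?_)
    by_contra! h
    exact hx ⟨hA.trans h.1.le, h.2.le.trans hB⟩
  have truncatable := approx.isTruncatableApprox (half_le_self logError_pos.le)
    hn.four_div_sq_le_logError u_le far_of_notMem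
  have hu_cont : Continuous u := continuousOn_univ.1 (hu.continuousOn isOpen_univ)
  have hφ_cont := φ.continuous_eval_sub A
  have support_le : (β + 4 / 5 * log n) / α ≤ B :=
    calc (β + 4 / 5 * log n) / α ≤ 2 * (4 / 5 * log n) / α := by gcongr; linarith [hn.beta_lt]
      _ = 8 / (5 * α) * log n := by field_simp; ring
      _ ≤ B := hB
  have slope_pos : 0 < α / 8 := by positivity
  refine ⟨N, φ, N_le.trans (hn.knotCount_le hα),
    fun i ↦ (knot_le i).trans (sub_le_sub_right support_le A), approx.knot_separated,
    Icc_subset_Ioc_left slope_pos approx.slope_mem,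
    Icc_subset_Ioc_left slope_pos approx.neg_finalSlope_mem,
    hn.truncExp_mass_mem hα truncatable hφ_cont hu_cont hf f_le_exp gap_le,
    fun x ↦ (f_le_exp x).trans (exp_le_exp.2 ?_),
    hn.hellingerSq_truncExpDensity_le hα truncatable hφ_cont hu_cont hf f_le_exp gap_le⟩
  linarith [truncatable.sub_le x, hn.logError_le_one]

end Approximation

end

theorem piecewise_loglinear_approximation_general {α : ℝ} (hα : 0 < α) (β : ℝ) :
    ∃ C : ℝ, 0 < C ∧ ∀ᶠ n : ℝ in atTop, ∀ f₀ : ℝ → ℝ, IsDensityFn f₀ → IsLogConcaveFn f₀ →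
      (∀ x, f₀ x ≤ exp (β - α * |x|)) → ∀ A B : ℝ,
      Icc (-(8 / (5 * α) * log n)) (8 / (5 * α) * log n) ⊆ Icc A B →
      ∃ (N : ℕ) (z : Fin N → ℝ) (fbar : ℝ → ℝ),
        IsDensityFn fbar ∧ IsLogConcaveFn fbar ∧
        N ≤ C * n ^ (1 / 5 : ℝ) * log n ∧ StrictMono z ∧ (∀ i, z i ∈ Icc 0 (B - A)) ∧
        hellingerSq f₀ fbar ≤ C * ((log n) ^ 2 * n ^ (-4 / 5 : ℝ)) ∧
        {x | 0 < fbar x} = Icc A B ∧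
        (∀ i j, i ≠ j → n ^ (-6 / 5 : ℝ) * log n ≤ |z i - z j|) ∧
        (∀ x ∈ Icc A B, f₀ x ≤ C * fbar x) ∧
        ∃ (γ₁ γ₂ γ₃ : ℝ) (p : Fin N → ℝ),
          γ₁ ∈ Icc 0 (2 * (B - A) * n ^ (4 / 5 : ℝ)) ∧ |γ₂| ≤ n ^ (4 / 5 : ℝ) ∧
          (∀ i, 0 ≤ p i) ∧ ∑ i, p i = 1 ∧
          ∀ x, fbar x = (Icc A B).indicator (fun y ↦ exp
            (γ₁ * (∑ i, min (z i) (y - A) / z i * p i) - γ₂ * (y - A) + γ₃)) x := by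
  obtain ⟨C, C_pos, hC_card, hC_hell, hC_dom⟩ : ∃ C, 0 < C ∧
      12 + 4 / α ≤ C ∧ hellingerConst α β ≤ C ∧ 2 * exp 1 ≤ C :=
    ⟨max (12 + 4 / α) (max (hellingerConst α β) (2 * exp 1)),
      lt_max_of_lt_left (by positivity), by simp, by simp, by simp⟩
  refine ⟨C, C_pos, (eventually_isLargeSampleSize α β).mono fun n hn f₀ hf f_lc f_le A B hAB ↦ ?_⟩
  have hn_pos := hn.pos
  have log_pos := one_pos.trans_le hn.one_le_log
  have cutoff_nonempty : -(8 / (5 * α) * log n) ≤ 8 / (5 * α) * log n :=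
    neg_le_self (by positivity)
  have ⟨hA, hB⟩ := (Icc_subset_Icc_iff cutoff_nonempty).1 hAB
  obtain ⟨N, φ, card_le, knot_le, knot_separated, slope_mem, neg_finalSlope_mem, mass_mem,
    f_le_eval, hellinger_le⟩ := hn.exists_spline hα hf f_lc f_le hA hB
  have mass_pos := (half_pos one_pos).trans_le mass_mem.1
  have separation_pos : 0 < n ^ (-6 / 5 : ℝ) * log n := by positivity
  refine ⟨N, φ.knot, φ.density A B, isDensityFn_truncExpDensity (φ.continuous_eval_sub A) mass_pos,
    φ.isLogConcaveFn_density mass_pos, card_le.trans (by gcongr),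
    fun i j hij ↦ by linarith [knot_separated i j hij], fun i ↦ ⟨(φ.knot_pos i).le, knot_le i⟩,
    hellinger_le.trans (by gcongr), setOf_truncExpDensity_pos mass_pos,
    fun i j ↦ le_abs_sub_of_add_le knot_separated, fun x hx ↦ ?_,
    φ.exists_mixture_representation (hA.trans (cutoff_nonempty.trans hB)) knot_le slope_mem
      neg_finalSlope_mem mass_pos⟩
  have density_pos : 0 < φ.density A B x := (setOf_truncExpDensity_pos mass_pos).ge hx
  exact (φ.le_mul_density mass_pos mass_mem.2 hx (f_le_eval x)).trans (by gcongr)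

/-- Proposition: piecewise log-linear approximation. Let
`f₀ ∈ F_{α,β}` and let `[A n, B n]` be compact intervals containing
`[−(8/(5α)) log n, (8/(5α)) log n]` with `B n − A n = o(n^{4/5})`. There is a
universal constant `c > 0` and constants `C = C(α,β) > 0`, `n₀ = n₀(α,β)` such
that for all `n ≥ n₀` there is a log-concave density `f̄ₙ`, piecewise log-linear
with `N̄ ≤ C n^{1/5} log n` knots `z₁ < ⋯ < z_{N̄} ∈ [0, B n − A n]` (explicit
mixture representation (v)), satisfying properties (i)–(v). -/
theorem piecewise_loglinear_approximation :
    ∃ c : ℝ, 0 < c ∧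
      ∀ α : ℝ, 0 < α → ∀ β : ℝ,
        ∃ C : ℝ, 0 < C ∧ ∃ n₀ : ℕ,
          ∀ f₀ : ℝ → ℝ, MemF α β f₀ →
            ∀ A B : ℕ → ℝ,
              (∀ n : ℕ, Icc (-((8 / (5 * α)) * Real.log n)) ((8 / (5 * α)) * Real.log n)
                  ⊆ Icc (A n) (B n)) →
              (fun n : ℕ => B n - A n) =o[atTop] (fun n : ℕ => (n : ℝ) ^ ((4:ℝ)/5)) →
              ∀ n : ℕ, n₀ ≤ n →
                ∃ (N : ℕ) (z : Fin N → ℝ) (fbar : ℝ → ℝ),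
                  -- f̄ₙ is a log-concave density
                  IsDensityFn fbar ∧ IsLogConcaveFn fbar ∧
                  -- at most C n^{1/5} log n knots, lying in [0, B n − A n]
                  (N : ℝ) ≤ C * (n : ℝ) ^ ((1:ℝ)/5) * Real.log n ∧
                  StrictMono z ∧ (∀ i, z i ∈ Icc 0 (B n - A n)) ∧
                  -- (i) Hellinger approximation
                  hellingerSq f₀ fbar ≤
                    C * ((Real.log n) ^ 2 * (n : ℝ) ^ (-(4:ℝ)/5) +
                      (B n - A n) ^ 2 * (n : ℝ) ^ (-(8:ℝ)/5)) ∧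
                  -- (ii) support is exactly [A n, B n]
                  {x : ℝ | 0 < fbar x} = Icc (A n) (B n) ∧
                  -- (iii) the knots are c n^{-6/5} log n separated
                  (∀ i j : Fin N, i ≠ j →
                    c * (n : ℝ) ^ (-(6:ℝ)/5) * Real.log n ≤ |z i - z j|) ∧
                  -- (iv) uniform domination of f₀ by C f̄ₙ on [A n, B n]
                  (∀ x ∈ Icc (A n) (B n), f₀ x ≤ C * fbar x) ∧
                  -- (v) explicit piecewise log-linear mixture representation
                  ∃ (γ₁ γ₂ γ₃ : ℝ) (p : Fin N → ℝ),
                    γ₁ ∈ Icc 0 (2 * (B n - A n) * (n : ℝ) ^ ((4:ℝ)/5)) ∧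
                    |γ₂| ≤ (n : ℝ) ^ ((4:ℝ)/5) ∧
                    (∀ i, 0 ≤ p i) ∧ (∑ i, p i) = 1 ∧
                    ∀ x : ℝ,
                      fbar x = Set.indicator (Icc (A n) (B n))
                        (fun y => Real.exp
                          (γ₁ * (∑ i, min (z i) (y - A n) / z i * p i) -
                            γ₂ * (y - A n) + γ₃)) x := by
  refine ⟨1, one_pos, fun α hα β ↦ ?_⟩
  obtain ⟨C, C_pos, approximation⟩ := piecewise_loglinear_approximation_general hα β
  obtain ⟨n₀, hn₀⟩ := eventually_atTop.1 (tendsto_natCast_atTop_atTop.eventually approximation)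
  refine ⟨C, C_pos, n₀, fun f₀ ⟨hf, _, f_lc, f_le⟩ A B hAB _ n hn ↦ ?_⟩
  obtain ⟨N, z, fbar, density, lc, card_le, mono, mem, hellinger_le, support, separated, rest⟩ :=
    hn₀ n hn f₀ hf f_lc f_le (A n) (B n) (hAB n)
  refine ⟨N, z, fbar, density, lc, card_le, mono, mem, hellinger_le.trans ?_, support,
    by simpa only [one_mul] using separated, rest⟩
  gcongr
  exact le_add_of_nonneg_right (by positivity)
end
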